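/- arXiv:2105.00254 — 3 statements merged into one kernel-verified Lean document; each statement's English description precedes it below -/
import Mathlib

section
/- Let G be a connected graph and let f : V(G) → {0,1} be a function with ∑_{v ∈ V(G)} f(v) even. Then there exists an f-parity perfect forest in G, i.e., a spanning forest F each of whose connected components is an induced subgraph of G and such that d_F(x) ≡ f(x) (mod 2) for every vertex x. -/
open SimpleGraph

/-- The degree of `v` in `F`, defined via `Set.ncard` so that no decidability
instances are needed. -/
noncomputable def fdeg {V : Type*} (F : SimpleGraph V) (v : V) : ℕ :=
  (F.neighborSet v).ncard

/-- `F` is a semiperfect spanning forest of `G`: `F` is a spanning subgraph of `G`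
that is a forest, and every connected component of `F` is an induced subgraph of `G`. -/
def IsSemiperfectForest {V : Type*} (G F : SimpleGraph V) : Prop :=
  F ≤ G ∧ F.IsAcyclic ∧ ∀ x y : V, F.Reachable x y → G.Adj x y → F.Adj x y

/-!
An `f`-parity subgraph is built as a mod 2 sum of trails, each joining a vertex to a representative
of its component; the contributions at a representative cancel because `f` has even sum on the
component. Now take an `f`-parity subgraph `F` with the fewest edges. Adding a closed trail `c` of
`G` to `F` modulo 2 keeps all degree parities, so by minimality at least half of the edges of `c`
lie outside `F`. Hence `F` contains no cycle; and if an edge `xy` of `G` outside `F` joined two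
vertices of one component of `F`, it would close a path of `F` to a cycle, of length at least three,
with only one edge outside `F`.
-/

open scoped symmDiff

section

variable {V : Type*} {G H K F : SimpleGraph V} {u v x y : V}

theorem ncard_symmDiff_add_two_mul_ncard_inter {α : Type*} {s t : Set α}
    (hs : s.Finite) (ht : t.Finite) :
    (s ∆ t).ncard + 2 * (s ∩ t).ncard = s.ncard + t.ncard := by
  have h_union : (s ∆ t).ncard = (s \ t).ncard + (t \ s).ncard :=
    Set.ncard_union_eq disjoint_sdiff_sdiff hs.sdiff ht.sdiff
  have hs_split := Set.ncard_inter_add_ncard_sdiff_eq_ncard s t hs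
  have ht_split := Set.ncard_inter_add_ncard_sdiff_eq_ncard t s ht
  rw [Set.inter_comm] at ht_split
  lia

theorem edgeSet_symmDiff (H K : SimpleGraph V) : (H ∆ K).edgeSet = H.edgeSet ∆ K.edgeSet := by
  simp only [symmDiff_def, edgeSet_sup, edgeSet_sdiff, Set.sup_eq_union]

theorem incidenceSet_symmDiff (H K : SimpleGraph V) (v : V) :
    (H ∆ K).incidenceSet v = H.incidenceSet v ∆ K.incidenceSet v := by
  ext e
  simp only [incidenceSet, edgeSet_symmDiff, Set.mem_symmDiff, Set.mem_ofPred_eq]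
  tauto

theorem fdeg_eq_ncard_incidenceSet (H : SimpleGraph V) (v : V) :
    fdeg H v = (H.incidenceSet v).ncard := by
  classical exact (Nat.card_congr (H.incidenceSetEquivNeighborSet v)).symm

theorem fdeg_symmDiff (hH : (H.incidenceSet v).Finite) (hK : (K.incidenceSet v).Finite) :
    (fdeg (H ∆ K) v : ZMod 2) = fdeg H v + fdeg K v := by
  have h_card := ncard_symmDiff_add_two_mul_ncard_inter hH hK
  simp only [← incidenceSet_symmDiff, ← fdeg_eq_ncard_incidenceSet] at h_card
  rw [← Nat.cast_add, ← h_card, Nat.cast_add, two_mul, Nat.cast_add, CharTwo.add_self_eq_zero,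
    add_zero]

theorem ncard_edgeSet_of_isTrail {p : G.Walk u v} (hp : p.IsTrail) :
    p.edgeSet.ncard = p.length := by
  classical
  rw [← p.coe_edges_toFinset, Set.ncard_coe_finset, List.toFinset_card_of_nodup hp.edges_nodup,
    p.length_edges]

theorem fdeg_spanningCoe_toSubgraph_of_isTrail [DecidableEq V] {p : G.Walk u v}
    (hp : p.IsTrail) (x : V) :
    fdeg p.toSubgraph.spanningCoe x = p.edges.countP (x ∈ ·) := by
  have h_incidence : p.toSubgraph.spanningCoe.incidenceSet x =
      ((p.edges.filter (x ∈ ·)).toFinset : Set (Sym2 V)) := by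
    ext e
    simp [incidenceSet]
  rw [fdeg_eq_ncard_incidenceSet, h_incidence, Set.ncard_coe_finset,
    List.toFinset_card_of_nodup (hp.edges_nodup.filter _), List.countP_eq_length_filter]

/-- `H` is an `f`-parity subgraph of `G`, with `f` read modulo 2. Finiteness of the edge set makes
the notion meaningful on infinite vertex types, where `fdeg` of a vertex of infinite degree is `0`.
-/
structure IsParitySubgraph (G : SimpleGraph V) (f : V → ZMod 2) (H : SimpleGraph V) : Prop where
  le : H ≤ G
  finite_edgeSet : H.edgeSet.Finite
  fdeg_eq : ∀ v, (fdeg H v : ZMod 2) = f v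

theorem isParitySubgraph_bot : IsParitySubgraph G 0 ⊥ where
  le := bot_le
  finite_edgeSet := by simp
  fdeg_eq v := by simp [fdeg]

theorem IsParitySubgraph.symmDiff {f g : V → ZMod 2} (hH : IsParitySubgraph G f H)
    (hK : IsParitySubgraph G g K) : IsParitySubgraph G (f + g) (H ∆ K) where
  le := symmDiff_le_sup.trans (sup_le hH.le hK.le)
  finite_edgeSet := by
    rw [edgeSet_symmDiff]
    exact hH.finite_edgeSet.symmDiff hK.finite_edgeSet
  fdeg_eq v := by
    rw [fdeg_symmDiff (hH.finite_edgeSet.subset (H.incidenceSet_subset v))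
      (hK.finite_edgeSet.subset (K.incidenceSet_subset v)), hH.fdeg_eq, hK.fdeg_eq, Pi.add_apply]

theorem isParitySubgraph_spanningCoe_toSubgraph_of_isTrail [DecidableEq V] {p : G.Walk u v}
    (hp : p.IsTrail) :
    IsParitySubgraph G (Pi.single u 1 + Pi.single v 1) p.toSubgraph.spanningCoe where
  le := p.toSubgraph.spanningCoe_le
  finite_edgeSet := by
    rw [Subgraph.edgeSet_spanningCoe, Walk.edgeSet_toSubgraph]
    exact p.edges.finite_toSet
  fdeg_eq x := by
    have h_even := hp.even_countP_edges_iff x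
    rw [← fdeg_spanningCoe_toSubgraph_of_isTrail hp] at h_even
    rw [Pi.add_apply, Pi.single_apply, Pi.single_apply]
    rcases Nat.even_or_odd (fdeg p.toSubgraph.spanningCoe x) with h | h
    · rw [ZMod.natCast_eq_zero_iff_even.2 h]
      grind [CharTwo.add_self_eq_zero (1 : ZMod 2)]
    · rw [ZMod.natCast_eq_one_iff_odd.2 h]
      grind

/-- The functions `V → ZMod 2` realized as degree parities of finite subgraphs of `G`. -/
def realizableParities (G : SimpleGraph V) : AddSubmonoid (V → ZMod 2) where
  carrier := {f | ∃ H, IsParitySubgraph G f H}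
  zero_mem' := ⟨⊥, isParitySubgraph_bot⟩
  add_mem' := fun ⟨_, hH⟩ ⟨_, hK⟩ => ⟨_, hH.symmDiff hK⟩

theorem single_add_single_mem_realizableParities [DecidableEq V] (h : G.Reachable u v) :
    Pi.single u 1 + Pi.single v 1 ∈ realizableParities G := by
  obtain ⟨p, hp⟩ := h.exists_isPath
  exact ⟨_, isParitySubgraph_spanningCoe_toSubgraph_of_isTrail hp.isTrail⟩

theorem sum_nsmul_comp_eq_zero_of_even {ι κ M : Type*} [DecidableEq κ] [AddCommMonoid M]
    [Module (ZMod 2) M] {s : Finset ι} {f : ι → ℕ} {r : ι → κ}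
    (heven : ∀ k, Even (∑ i ∈ s with r i = k, f i)) (g : κ → M) :
    ∑ i ∈ s, f i • g (r i) = 0 := by
  rw [← Finset.sum_fiberwise_of_maps_to (t := s.image r) (fun _ => Finset.mem_image_of_mem r)]
  refine Finset.sum_eq_zero fun k _ => ?_
  calc ∑ i ∈ s with r i = k, f i • g (r i)
    _ = ∑ i ∈ s with r i = k, f i • g k :=
      Finset.sum_congr rfl fun i hi => by rw [(Finset.mem_filter.1 hi).2]
    _ = ((∑ i ∈ s with r i = k, f i : ℕ) : ZMod 2) • g k := by
      rw [Nat.cast_smul_eq_nsmul, Finset.sum_smul]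
    _ = 0 := by rw [ZMod.natCast_eq_zero_iff_even.2 (heven k), zero_smul]

theorem natCast_mem_realizableParities {f : V → ℕ} (hf : f.support.Finite)
    (hsum : ∀ c : G.ConnectedComponent, Even (∑ᶠ v ∈ c.supp, f v)) :
    (fun v => (f v : ZMod 2)) ∈ realizableParities G := by
  classical
  let single (v : V) : V → ZMod 2 := Pi.single v 1
  let rep (v : V) : V := (G.connectedComponentMk v).out
  have h_reachable (v : V) : G.Reachable v (rep v) :=
    ConnectedComponent.exact (Quot.out_eq _).symm
  have h_even (c : G.ConnectedComponent) :
      Even (∑ v ∈ hf.toFinset with G.connectedComponentMk v = c, f v) :=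
    (finsum_mem_eq_sum_filter f c.supp hf) ▸ hsum c
  have h_rep : ∑ v ∈ hf.toFinset, f v • single (rep v) = 0 :=
    sum_nsmul_comp_eq_zero_of_even h_even fun c => single c.out
  have h_single : (fun v => (f v : ZMod 2)) = ∑ v ∈ hf.toFinset, f v • single v := by
    ext v
    simp +contextual [single, Pi.single_apply]
  have h_sum : (fun v => (f v : ZMod 2)) =
      ∑ v ∈ hf.toFinset, f v • (single v + single (rep v)) := by
    simp only [smul_add, Finset.sum_add_distrib, h_rep, add_zero, h_single]
  rw [h_sum]
  exact sum_mem fun v _ => nsmul_mem (single_add_single_mem_realizableParities (h_reachable v)) _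

/-- `F` is an `f`-parity subgraph of `G` with the least possible number of edges. -/
def IsMinParitySubgraph (G : SimpleGraph V) (f : V → ZMod 2) (F : SimpleGraph V) : Prop :=
  MinimalFor (IsParitySubgraph G f) (fun H => H.edgeSet.ncard) F

namespace IsMinParitySubgraph

variable {f : V → ZMod 2}

theorem length_le_two_mul_ncard_edgeSet_sdiff (hF : IsMinParitySubgraph G f F) {c : G.Walk u u}
    (hc : c.IsTrail) : c.length ≤ 2 * (c.edgeSet \ F.edgeSet).ncard := by
  classical
  have h_closed : IsParitySubgraph G 0 c.toSubgraph.spanningCoe := by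
    rw [← ZModModule.add_self (Pi.single u 1 : V → ZMod 2)]
    exact isParitySubgraph_spanningCoe_toSubgraph_of_isTrail hc
  have h_edgeSet : c.toSubgraph.spanningCoe.edgeSet = c.edgeSet := c.edgeSet_toSubgraph
  have h_finite : c.edgeSet.Finite := h_edgeSet ▸ h_closed.finite_edgeSet
  have h_min : F.edgeSet.ncard ≤ (F.edgeSet ∆ c.edgeSet).ncard := by
    rw [← h_edgeSet, ← edgeSet_symmDiff]
    exact hF.le (add_zero f ▸ hF.prop.symmDiff h_closed)
  have h_symmDiff := ncard_symmDiff_add_two_mul_ncard_inter hF.prop.finite_edgeSet h_finite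
  have h_split := Set.ncard_inter_add_ncard_sdiff_eq_ncard c.edgeSet F.edgeSet h_finite
  rw [Set.inter_comm] at h_split
  rw [← ncard_edgeSet_of_isTrail hc]
  lia

theorem isAcyclic (hF : IsMinParitySubgraph G f F) : F.IsAcyclic := by
  intro u c hc
  have h_le := hF.length_le_two_mul_ncard_edgeSet_sdiff (hc.isTrail.mapLe hF.prop.le)
  have h_outside : c.edgeSet \ F.edgeSet = ∅ :=
    Set.sdiff_eq_empty.2 fun _ he => c.edges_subset_edgeSet he
  rw [Walk.length_mapLe, Walk.edgeSet_mapLe_eq_edgeSet, h_outside, Set.ncard_empty] at h_le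
  have := hc.three_le_length
  lia

theorem adj_of_reachable (hF : IsMinParitySubgraph G f F) (hxy : F.Reachable x y)
    (h : G.Adj x y) : F.Adj x y := by
  by_contra h_not_adj
  obtain ⟨p, hp⟩ := hxy.symm.exists_isPath
  have h_cycle : (Walk.cons h (p.mapLe hF.prop.le)).IsCycle := by
    rw [Walk.cons_isCycle_iff, Walk.edges_mapLe_eq_edges]
    exact ⟨hp.mapLe _, fun hmem => h_not_adj (p.adj_of_mem_edges hmem)⟩
  have h_outside : (Walk.cons h (p.mapLe hF.prop.le)).edgeSet \ F.edgeSet ⊆ {s(x, y)} := by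
    rw [Walk.edgeSet_cons, Walk.edgeSet_mapLe_eq_edgeSet]
    rintro e ⟨rfl | he, heF⟩
    · rfl
    · exact absurd (p.edges_subset_edgeSet he) heF
  have h_ncard := Set.ncard_le_ncard h_outside
  rw [Set.ncard_singleton] at h_ncard
  have := hF.length_le_two_mul_ncard_edgeSet_sdiff h_cycle.isTrail
  have := h_cycle.three_le_length
  lia

theorem isSemiperfectForest (hF : IsMinParitySubgraph G f F) : IsSemiperfectForest G F :=
  ⟨hF.prop.le, hF.isAcyclic, fun _ _ => hF.adj_of_reachable⟩

end IsMinParitySubgraph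

theorem exists_parity_perfect_forest_general (G : SimpleGraph V) {f : V → ℕ} (hf : f.support.Finite)
    (hsum : ∀ c : G.ConnectedComponent, Even (∑ᶠ v ∈ c.supp, f v)) :
    ∃ F : SimpleGraph V, IsSemiperfectForest G F ∧ F.edgeSet.Finite ∧
      ∀ x : V, fdeg F x ≡ f x [MOD 2] := by
  obtain ⟨F, hF⟩ := exists_minimalFor_of_wellFoundedLT _ (fun H : SimpleGraph V => H.edgeSet.ncard)
    (natCast_mem_realizableParities hf hsum)
  exact ⟨F, IsMinParitySubgraph.isSemiperfectForest hF, hF.prop.finite_edgeSet,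
    fun x => (ZMod.natCast_eq_natCast_iff _ _ _).1 (hF.prop.fdeg_eq x)⟩

end

/-- Let `G` be a connected graph and `f : V → {0,1}` an even-sum function.
Then there exists an `f`-parity perfect forest in `G`: a semiperfect spanning forest `F`
with `d_F(x) ≡ f(x) (mod 2)` for every vertex `x`. -/
theorem exists_parity_perfect_forest {V : Type*} [Fintype V]
    (G : SimpleGraph V) (hG : G.Connected)
    (f : V → ℕ) (hf01 : ∀ v, f v ≤ 1) (hfsum : Even (∑ v, f v)) :
    ∃ F : SimpleGraph V, IsSemiperfectForest G F ∧ ∀ x : V, fdeg F x % 2 = f x := by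
  have h_supp (c : G.ConnectedComponent) : c.supp = Set.univ :=
    Set.eq_univ_of_forall fun _ => hG.preconnected.subsingleton_connectedComponent.elim _ _
  obtain ⟨F, hF, -, hdeg⟩ := exists_parity_perfect_forest_general G f.support.toFinite
    fun c => by rwa [h_supp, finsum_mem_univ, finsum_eq_sum_of_fintype]
  exact ⟨F, hF, fun x => Eq.trans (hdeg x) (Nat.mod_eq_of_lt ((hf01 x).trans_lt one_lt_two))⟩
end

section
/- Let B denote the family of all connected graphs in which every block is a complete graph of odd order. If G is a connected graph of odd order n ≥ 3, then G contains a proper 1-perfect forest if and only if G does not belong to B. -/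
open SimpleGraph

/-- `s` is (the vertex set of) a block of `G`: the induced subgraph on `s` is connected,
has no cut-vertex, and `s` is maximal with these properties. -/
def IsGraphBlock {V : Type*} (G : SimpleGraph V) (s : Set V) : Prop :=
  (G.induce s).Connected ∧
  (∀ x ∈ s, (G.induce (s \ {x})).Preconnected) ∧
  ∀ t : Set V, s ⊆ t → (G.induce t).Connected →
    (∀ x ∈ t, (G.induce (t \ {x})).Preconnected) → t = s

/-- `G` belongs to the family `B` of connected graphs in which every block is a
complete graph of odd order. -/
def InFamilyB {V : Type*} (G : SimpleGraph V) : Prop :=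
  G.Connected ∧ ∀ s : Set V, IsGraphBlock G s →
    (∀ x ∈ s, ∀ y ∈ s, x ≠ y → G.Adj x y) ∧ Odd s.ncard

/-!
A subgraph with prescribed odd-degree vertices and as few edges as possible is a semiperfect
forest. Hence, given a connected set `T` of odd size whose complement induces only even components,
and `v ∈ T`, there is a semiperfect forest respecting the cut `(T, Tᶜ)` in which exactly `v` has
even degree; by the handshake lemma `v` is not isolated in it as soon as some component of `T \ {v}`
is odd. Taking `T` to be everything settles the graphs for which some `G - v` has an odd component.
In the remaining ones every block is odd, and if a block is not complete, then it contains an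
induced path on three vertices whose removal leaves the block connected; its vertex set serves
as `T`, with `v` the centre of the path.

Conversely, if `G` is in `B`, then all components of `G - v` are even. The neighbours of `v` in such
a component `C` form a clique together with `v`, so a semiperfect forest joins `v` to at most one
vertex of `C`. If it does join `v` to one, and all degrees in `C` are odd, then the handshake lemma
makes `C` odd.
-/

/-- `W` is a union of connected components of the subgraph of `G` induced by `X`. Parity
conditions on components are stated for unions of components, which are stable under
complements and restrictions. -/
def IsComponentUnion {V : Type*} (G : SimpleGraph V) (X W : Set V) : Prop :=
  W ⊆ X ∧ ∀ ⦃w⦄, w ∈ W → ∀ ⦃y⦄, y ∈ X → G.Adj w y → y ∈ W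

section ComponentUnion

variable {V : Type*} {G : SimpleGraph V} {X Y W C U : Set V} {a r x : V}

theorem isComponentUnion_self : IsComponentUnion G X X :=
  ⟨subset_rfl, fun _ _ _ hy _ => hy⟩

namespace IsComponentUnion

theorem mem_of_reachable (h : IsComponentUnion G X W) {x y : X}
    (hxy : (G.induce X).Reachable x y) (hx : (x : V) ∈ W) : (y : V) ∈ W := by
  obtain ⟨p⟩ := hxy
  induction p with
  | nil => exact hx
  | cons hadj _ ih => exact ih (h.2 hx (Subtype.property _) hadj)

theorem subset_of_preconnected (h : IsComponentUnion G X W)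
    (hC : (G.induce C).Preconnected) (hCX : C ⊆ X) (haC : a ∈ C) (haW : a ∈ W) : C ⊆ W :=
  fun c hc => h.mem_of_reachable ((hC ⟨a, haC⟩ ⟨c, hc⟩).map (G.induceHomOfLE hCX).toHom) haW

theorem eq_empty_of_notMem (h : IsComponentUnion G X W)
    (hX : (G.induce X).Preconnected) (hr : r ∈ X) (hrW : r ∉ W) : W = ∅ :=
  Set.eq_empty_of_forall_notMem fun _ hw =>
    hrW (h.subset_of_preconnected hX subset_rfl (h.1 hw) hw hr)

theorem sdiff (h : IsComponentUnion G X W) : IsComponentUnion G X (X \ W) :=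
  ⟨Set.sdiff_subset, fun _ hw _ hy hadj => ⟨hy, fun hyW => hw.2 (h.2 hyW hw.1 hadj.symm)⟩⟩

theorem restrict (h : IsComponentUnion G X W) (hYX : Y ⊆ X) : IsComponentUnion G Y (W ∩ Y) :=
  ⟨Set.inter_subset_right, fun _ hw _ hy hadj => ⟨h.2 hw.1 (hYX hy) hadj, hy⟩⟩

theorem mono (h : IsComponentUnion G X W) (hWY : W ⊆ Y) (hYX : Y ⊆ X) : IsComponentUnion G Y W :=
  ⟨hWY, fun _ hw _ hy => h.2 hw (hYX hy)⟩

theorem trans (h : IsComponentUnion G X Y) (h' : IsComponentUnion G Y W) :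
    IsComponentUnion G X W :=
  ⟨h'.1.trans h.1, fun _ hw _ hy hadj => h'.2 hw (h.2 (h'.1 hw) hy hadj) hadj⟩

end IsComponentUnion

theorem isComponentUnion_setOf_reachable (r : X) :
    IsComponentUnion G X {y | ∃ hy : y ∈ X, (G.induce X).Reachable r ⟨y, hy⟩} :=
  ⟨fun _ hy => hy.1, fun _ ⟨_, hrw⟩ _ hy hadj =>
    ⟨hy, hrw.trans (Adj.reachable (G := G.induce X) hadj)⟩⟩

theorem preconnected_induce_of_forall_eq_empty (hr : r ∈ X)
    (h : ∀ W, IsComponentUnion G X W → r ∉ W → W = ∅) : (G.induce X).Preconnected := by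
  have hempty := h _ (isComponentUnion_setOf_reachable (G := G) ⟨r, hr⟩).sdiff
    fun hr' => hr'.2 ⟨hr, .rfl⟩
  have hreach (x : X) : (G.induce X).Reachable ⟨r, hr⟩ x :=
    (Set.sdiff_eq_empty.1 hempty x.2).2
  exact fun x y => (hreach x).symm.trans (hreach y)

theorem exists_component (ha : a ∈ X) :
    ∃ C, IsComponentUnion G X C ∧ a ∈ C ∧ (G.induce C).Preconnected := by
  have hC := isComponentUnion_setOf_reachable (G := G) ⟨a, ha⟩
  refine ⟨_, hC, ⟨ha, .rfl⟩, preconnected_induce_of_forall_eq_empty ⟨ha, .rfl⟩ fun W hW haW => ?_⟩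
  refine Set.eq_empty_of_forall_notMem fun w hw => haW ?_
  obtain ⟨hwX, hreach⟩ := hW.1 hw
  exact (hC.trans hW).mem_of_reachable (x := ⟨w, hwX⟩) hreach.symm hw

theorem IsComponentUnion.preconnected_sdiff (hX : (G.induce X).Preconnected)
    (hx : x ∈ X) (hU : IsComponentUnion G (X \ {x}) U) : (G.induce (X \ U)).Preconnected := by
  have hxU : x ∉ U := fun h => (hU.1 h).2 rfl
  refine preconnected_induce_of_forall_eq_empty (r := x) ⟨hx, hxU⟩ fun W hW hxW => ?_
  refine IsComponentUnion.eq_empty_of_notMem ⟨fun w hw => (hW.1 hw).1, ?_⟩ hX hx hxW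
  intro w hw y hy hadj
  refine hW.2 hw ⟨hy, fun hyU => (hW.1 hw).2 (hU.2 hyU ⟨(hW.1 hw).1, ?_⟩ hadj.symm)⟩ hadj
  rintro rfl
  exact hxW hw

end ComponentUnion

/-- `a`, `v`, `b` are the vertices of an induced path with three vertices and centre `v`. -/
structure IsInducedP3 {V : Type*} (G : SimpleGraph V) (a v b : V) : Prop where
  adj_left : G.Adj v a
  adj_right : G.Adj v b
  ne : a ≠ b
  not_adj : ¬ G.Adj a b

section InducedP3

variable {V : Type*} {G : SimpleGraph V} {X : Set V} {a v b : V}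

theorem IsInducedP3.symm (h : IsInducedP3 G a v b) : IsInducedP3 G b v a :=
  ⟨h.adj_right, h.adj_left, h.ne.symm, fun hadj => h.not_adj hadj.symm⟩

theorem IsInducedP3.odd_ncard (h : IsInducedP3 G a v b) : Odd ({a, v, b} : Set V).ncard := by
  rw [Set.ncard_eq_three.2 ⟨a, v, b, h.adj_left.ne', h.ne, h.adj_right.ne, rfl⟩]
  decide

theorem isClique_of_forall_not_isInducedP3 (hX : (G.induce X).Preconnected)
    (h : ∀ a ∈ X, ∀ v ∈ X, ∀ b ∈ X, ¬ IsInducedP3 G a v b) : G.IsClique X := by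
  intro x hx y hy hxy
  have hN : IsComponentUnion G X {z ∈ X | z = x ∨ G.Adj x z} := by
    refine ⟨Set.sep_subset _ _, ?_⟩
    rintro w ⟨hw, rfl | hxw⟩ z hz hwz
    · exact ⟨hz, .inr hwz⟩
    · by_contra hz'
      obtain ⟨hzx, hxz⟩ := not_or.1 fun hor => hz' ⟨hz, hor⟩
      exact h x hx w hw z hz ⟨hxw.symm, hwz, Ne.symm hzx, hxz⟩
  exact ((hN.subset_of_preconnected hX subset_rfl hx ⟨hx, .inl rfl⟩ hy).2).resolve_left hxy.symm

end InducedP3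

/-- The subgraph of `G` induced by `s` is connected and has no cut-vertex. Blocks are the
maximal nonseparable sets. -/
def IsNonseparable {V : Type*} (G : SimpleGraph V) (s : Set V) : Prop :=
  (G.induce s).Connected ∧ ∀ x ∈ s, (G.induce (s \ {x})).Preconnected

/-- An induced path `a`, `v`, `b` in `s` together with a connected set `C` of remaining vertices
of `s`. -/
structure IsP3Split {V : Type*} (G : SimpleGraph V) (s C : Set V) (a v b : V) : Prop where
  isInducedP3 : IsInducedP3 G a v b
  path_subset : {a, v, b} ⊆ s
  subset : C ⊆ s \ {a, v, b}
  preconnected : (G.induce C).Preconnected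

/-- An induced path in `s` and a connected set `C` of remaining vertices of `s` that is as large as
possible, over all choices of the path. If `C` misses some remaining vertex, then `v`, `a` and a
suitable vertex of `C` form an induced path whose removal keeps `s` connected. -/
structure IsMaximumP3Split {V : Type*} (G : SimpleGraph V) (s C : Set V) (a v b : V) : Prop
    extends IsP3Split G s C a v b where
  ncard_le : ∀ C' a' v' b', IsP3Split G s C' a' v' b' → C'.ncard ≤ C.ncard

section Nonseparable

variable {V : Type*} {G : SimpleGraph V} {s C X N : Set V} {a b c v z : V}

theorem preconnected_induce_insert (hC : (G.induce C).Preconnected) (hc : c ∈ C)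
    (hadj : G.Adj c z) : (G.induce (insert z C)).Preconnected := by
  rw [← Set.union_singleton]
  exact (connected_induce_union hC .of_subsingleton hc (Set.mem_singleton z) hadj).preconnected

theorem exists_mem_forall_isComponentUnion_disjoint [Finite V]
    (hX : (G.induce X).Preconnected) (hb : b ∈ X) (hNX : N ⊆ X) (hN : N.Nonempty) :
    ∃ c ∈ N, ∀ U, IsComponentUnion G (X \ {c}) U → b ∉ U → Disjoint U N := by
  by_contra! hbad
  choose! U hU hbU hUN using hbad
  obtain ⟨c, hcN, hmin⟩ := Set.exists_min_image N (fun c => (U c).ncard) N.toFinite hN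
  obtain ⟨d, hdU, hdN⟩ := Set.not_disjoint_iff.1 (hUN c hcN)
  have hconn : (G.induce (X \ U c)).Preconnected := (hU c hcN).preconnected_sdiff hX (hNX hcN)
  have hne (x : V) (hx : x ∈ X \ U c) : x ∈ X \ {d} :=
    ⟨hx.1, fun hxd => hx.2 (Set.mem_singleton_iff.1 hxd ▸ hdU)⟩
  have hsub : U d ⊆ U c := fun x hx => by
    by_contra hxU
    have hxX : x ∈ X \ U c := ⟨((hU d hdN).1 hx).1, hxU⟩
    exact hbU d hdN
      ((hU d hdN).subset_of_preconnected hconn hne hxX hx ⟨hb, hbU c hcN⟩)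
  exact (hmin d hdN).not_gt
    (Set.ncard_lt_ncard ⟨hsub, fun h => ((hU d hdN).1 (h hdU)).2 rfl⟩)

theorem IsNonseparable.mem_of_isComponentUnion {W : Set V} {x y : V} (hs : IsNonseparable G s)
    (hz : z ∈ s) (hW : IsComponentUnion G (s \ {z}) W) (hx : x ∈ W) (hy : y ∈ s \ {z}) :
    y ∈ W :=
  hW.subset_of_preconnected (hs.2 z hz) subset_rfl (hW.1 hx) hx hy

namespace IsMaximumP3Split

theorem symm (h : IsMaximumP3Split G s C a v b) : IsMaximumP3Split G s C b v a := by
  have hset : ({b, v, a} : Set V) = {a, v, b} := by grind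
  exact ⟨⟨h.isInducedP3.symm, hset ▸ h.path_subset, hset ▸ h.subset, h.preconnected⟩, h.ncard_le⟩

variable [Finite V]

theorem isComponentUnion (h : IsMaximumP3Split G s C a v b)
    : IsComponentUnion G (s \ {a, v, b}) C := by
  refine ⟨h.subset, fun w hw y hy hadj => ?_⟩
  by_contra hyC
  have := h.ncard_le (insert y C) a v b ⟨h.isInducedP3, h.path_subset,
    Set.insert_subset hy h.subset, preconnected_induce_insert h.preconnected hw hadj⟩
  rw [Set.ncard_insert_of_notMem hyC] at this
  omega

theorem not_isInducedP3 (h : IsMaximumP3Split G s C a v b)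
    (hz : z ∈ ({a, v, b} : Set V)) (hc : c ∈ C) (hcz : G.Adj c z)
    {a' v' b' : V} (hsub : {a', v', b'} ⊆ s \ insert z C) : ¬ IsInducedP3 G a' v' b' := by
  intro hP
  have hzC : z ∉ C := fun hzC => (h.subset hzC).2 hz
  have := h.ncard_le (insert z C) a' v' b' ⟨hP, fun _ hx => (hsub hx).1,
    fun x hx => ⟨Set.insert_subset (h.path_subset hz) (fun _ hy => (h.subset hy).1) hx,
      fun hx' => (hsub hx').2 hx⟩, preconnected_induce_insert h.preconnected hc hcz⟩
  rw [Set.ncard_insert_of_notMem hzC] at this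
  omega

theorem nonempty (h : IsMaximumP3Split G s C a v b)
    {d : V} (hd : d ∈ s \ {a, v, b}) : C.Nonempty := by
  rw [← Set.ncard_pos]
  have := h.ncard_le {d} a v b ⟨h.isInducedP3, h.path_subset, by simpa using hd, .of_subsingleton⟩
  rwa [Set.ncard_singleton] at this

theorem exists_adj_ne (h : IsMaximumP3Split G s C a v b) (hs : IsNonseparable G s)
    (hC : C.Nonempty) (hz : z ∈ ({a, v, b} : Set V)) :
    ∃ c ∈ C, ∃ y ∈ ({a, v, b} : Set V), y ≠ z ∧ G.Adj c y := by
  by_contra! hno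
  have hCz : IsComponentUnion G (s \ {z}) C := by
    refine ⟨fun x hx => ⟨(h.subset hx).1, ?_⟩, fun w hw y hy hadj => ?_⟩
    · rintro rfl
      exact (h.subset hx).2 hz
    · exact h.isComponentUnion.2 hw ⟨hy.1, fun hyP => hno w hw y hyP hy.2 hadj⟩ hadj
  obtain ⟨y, hyP, hyz⟩ : ∃ y ∈ ({a, v, b} : Set V), y ≠ z := by
    obtain rfl | haz := eq_or_ne a z
    · exact ⟨b, by simp, h.isInducedP3.ne.symm⟩
    · exact ⟨a, by simp, haz⟩
  obtain ⟨x, hx⟩ := hC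
  have hyC := hs.mem_of_isComponentUnion (h.path_subset hz) hCz hx ⟨h.path_subset hyP, hyz⟩
  exact (h.subset hyC).2 hyP

theorem isClique_sdiff_insert (h : IsMaximumP3Split G s C a v b) (hs : IsNonseparable G s)
    (hc : c ∈ C) (hca : G.Adj c a) : G.IsClique (s \ insert a C) := by
  have hP := h.isInducedP3
  have hav := hP.adj_left.ne'
  have haS : a ∈ s := h.path_subset (by simp)
  have hvS : v ∈ s \ insert a C := by
    have := h.path_subset (show v ∈ _ by simp)
    have := @h.subset v
    grind
  refine isClique_of_forall_not_isInducedP3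
    (preconnected_induce_of_forall_eq_empty hvS fun U hU hvU => ?_) fun a' ha' v' hv' b' hb' =>
      h.not_isInducedP3 (by simp) hc hca (by grind)
  have hbU : b ∉ U := fun hbU => hvU (hU.2 hbU hvS hP.adj_right.symm)
  refine IsComponentUnion.eq_empty_of_notMem (r := v) (X := s \ {a})
    ⟨fun u hu => ?_, fun u hu y hy hadj => ?_⟩ (hs.2 a haS) ?_ hvU
  · have := hU.1 hu
    grind
  · have hyC : y ∉ C := fun hyC => (hU.1 hu).2 <| .inr <|
      h.isComponentUnion.2 hyC (by have := hU.1 hu; grind) hadj.symm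
    exact hU.2 hu (by grind) hadj
  · grind

theorem exists_adj_right (h : IsMaximumP3Split G s C a v b) (hs : IsNonseparable G s)
    (hc : c ∈ C) (hca : G.Adj c a) : ∃ c ∈ C, G.Adj c b := by
  by_contra! hCb
  have hP := h.isInducedP3
  have hPs := h.path_subset
  have hCs := h.subset
  obtain ⟨c', hc', hc'v⟩ : ∃ c' ∈ C, G.Adj c' v := by
    obtain ⟨c', hc', y, hy, hya, hadj⟩ := h.exists_adj_ne hs ⟨c, hc⟩ (z := a) (by simp)
    obtain rfl | rfl | rfl := hy
    · exact absurd rfl hya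
    · exact ⟨c', hc', hadj⟩
    · exact absurd hadj (hCb c' hc')
  have ha (y : V) (hy : y ∈ s \ insert a C) (hyv : y ≠ v) : ¬ G.Adj a y := by
    intro hay
    have hyb : y ≠ b := fun hyb => hP.not_adj (hyb ▸ hay)
    have hadj : G.Adj y b := h.isClique_sdiff_insert hs hc hca hy (by grind) hyb
    refine h.not_isInducedP3 (by simp) hc' hc'v ?_ ⟨hay.symm, hadj, hP.ne, hP.not_adj⟩
    have := hP.adj_left.ne
    have := hP.adj_right.ne
    grind
  have hW : IsComponentUnion G (s \ {v}) (insert a C) := by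
    refine ⟨?_, fun w hw y hy hadj => ?_⟩
    · have := hP.adj_left.ne
      grind
    · by_contra hyC
      obtain rfl | hwC := hw
      · exact ha y ⟨hy.1, hyC⟩ hy.2 hadj
      · have hyb : y ≠ b := fun hyb => hCb w hwC (hyb ▸ hadj)
        exact hyC (.inr (h.isComponentUnion.2 hwC (by grind) hadj))
  have hb : b ∈ insert a C := hs.mem_of_isComponentUnion (hPs (by simp)) hW
    (Set.mem_insert a C) ⟨hPs (by simp), hP.adj_right.ne'⟩
  exact hb.elim hP.ne.symm fun hbC => (hCs hbC).2 (by simp)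

theorem exists_adj_left_and_right (h : IsMaximumP3Split G s C a v b) (hs : IsNonseparable G s)
    (hC : C.Nonempty) : (∃ c ∈ C, G.Adj c a) ∧ ∃ c ∈ C, G.Adj c b := by
  obtain ⟨c, hc, y, rfl | rfl | rfl, hyv, hadj⟩ :=
    h.exists_adj_ne hs hC (z := v) (by simp)
  · exact ⟨⟨c, hc, hadj⟩, h.exists_adj_right hs hc hadj⟩
  · exact absurd rfl hyv
  · exact ⟨h.symm.exists_adj_right hs hc hadj, ⟨c, hc, hadj⟩⟩

theorem adj_right_of_notMem (h : IsMaximumP3Split G s C a v b) (hs : IsNonseparable G s)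
    {x : V} (hC : C.Nonempty) (hx : x ∈ s \ {a, v, b}) (hxC : x ∉ C) : G.Adj x b := by
  obtain ⟨⟨c, hc, hca⟩, -⟩ := h.exists_adj_left_and_right hs hC
  have := h.isInducedP3.ne
  have := h.path_subset
  have := h.subset
  exact h.isClique_sdiff_insert hs hc hca (by grind) (by grind) (by grind)

theorem not_adj_centre (h : IsMaximumP3Split G s C a v b) (hs : IsNonseparable G s)
    {d : V} (hd : d ∈ s \ {a, v, b}) (hdC : d ∉ C) (hc : c ∈ C) : ¬ G.Adj v c := by
  intro hvc
  have hP := h.isInducedP3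
  refine h.not_isInducedP3 (z := v) (by simp) hc hvc.symm (a' := a) (v' := d) (b' := b) ?_
    ⟨?_, h.adj_right_of_notMem hs ⟨c, hc⟩ hd hdC, hP.ne, hP.not_adj⟩
  · have := hP.adj_left.ne
    have := hP.adj_right.ne
    have := h.path_subset
    have := h.subset
    grind
  · exact h.symm.adj_right_of_notMem hs ⟨c, hc⟩ (by grind) hdC

theorem preconnected_sdiff (h : IsMaximumP3Split G s C a v b) (hs : IsNonseparable G s)
    (hc : c ∈ C) (hCv : ∀ x ∈ C, ¬ G.Adj v x)
    (hsep : ∀ U, IsComponentUnion G (insert b C \ {c}) U → b ∉ U →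
      Disjoint U {x ∈ C | G.Adj x a}) :
    (G.induce (s \ {v, a, c})).Preconnected := by
  have hPs := h.path_subset
  have hCs := h.subset
  have hb : b ∈ s \ {v, a, c} := by
    have := h.isInducedP3.ne
    have := h.isInducedP3.adj_right.ne
    grind
  refine preconnected_induce_of_forall_eq_empty hb fun U hU hbU => ?_
  have hUC : U ⊆ C \ {c} := fun u hu => by
    have hmem := hU.1 hu
    have hub : u ≠ b := fun hub => hbU (hub ▸ hu)
    refine ⟨by_contra fun huC => hbU (hU.2 hu hb ?_), by grind⟩
    exact h.adj_right_of_notMem hs ⟨c, hc⟩ (by grind) huC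
  have hUX : IsComponentUnion G (insert b C \ {c}) U := by
    have hsub : insert b C \ {c} ⊆ s \ {v, a, c} := by
      rintro x ⟨rfl | hx, hxc⟩ <;> grind
    exact hU.mono (fun u hu => ⟨.inr (hUC hu).1, (hUC hu).2⟩) hsub
  refine IsComponentUnion.eq_empty_of_notMem (X := s \ {c}) ⟨by grind, fun u hu y hy hadj => ?_⟩
    (hs.2 c (hCs hc).1) ⟨hb.1, by grind⟩ hbU
  have hyv : y ≠ v := fun hyv => hCv u (hUC hu).1 (hyv ▸ hadj.symm)
  have hya : y ≠ a := fun hya =>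
    Set.disjoint_left.1 (hsep U hUX hbU) hu ⟨(hUC hu).1, hya ▸ hadj⟩
  exact hU.2 hu (by grind) hadj

theorem exists_preconnected_sdiff (h : IsMaximumP3Split G s C a v b) (hs : IsNonseparable G s)
    {d : V} (hd : d ∈ s \ {a, v, b}) (hdC : d ∉ C) :
    ∃ c ∈ C, IsInducedP3 G v a c ∧ (G.induce (s \ {v, a, c})).Preconnected := by
  have hCv (x : V) (hx : x ∈ C) : ¬ G.Adj v x := h.not_adj_centre hs hd hdC hx
  obtain ⟨⟨ca, hcaC, hca⟩, cb, hcbC, hcb⟩ :=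
    h.exists_adj_left_and_right hs (h.nonempty hd)
  obtain ⟨c, ⟨hcC, hcadj⟩, hsep⟩ := exists_mem_forall_isComponentUnion_disjoint
    (N := {x ∈ C | G.Adj x a}) (preconnected_induce_insert h.preconnected hcbC hcb)
    (Set.mem_insert b C) (fun x hx => .inr hx.1) ⟨ca, hcaC, hca⟩
  have hvc : v ≠ c := by
    rintro rfl
    exact (h.subset hcC).2 (by simp)
  exact ⟨c, hcC, ⟨h.isInducedP3.adj_left.symm, hcadj.symm, hvc, hCv c hcC⟩,
    h.preconnected_sdiff hs hcC hCv hsep⟩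

end IsMaximumP3Split

theorem IsNonseparable.exists_isInducedP3_preconnected_sdiff [Finite V]
    (hs : IsNonseparable G s) (hclique : ¬ G.IsClique s) :
    ∃ a v b, IsInducedP3 G a v b ∧ {a, v, b} ⊆ s ∧
      (G.induce (s \ {a, v, b})).Preconnected := by
  obtain ⟨a₀, ha₀, v₀, hv₀, b₀, hb₀, hP₀⟩ :
      ∃ a ∈ s, ∃ v ∈ s, ∃ b ∈ s, IsInducedP3 G a v b := by
    by_contra! hno
    exact hclique (isClique_of_forall_not_isInducedP3 hs.1.preconnected hno)
  obtain ⟨C, ⟨a, v, b, hsplit⟩, hmax⟩ := Set.exists_max_image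
    {C | ∃ a v b, IsP3Split G s C a v b} Set.ncard (Set.toFinite _)
    ⟨∅, a₀, v₀, b₀, hP₀, by grind, Set.empty_subset _, .of_subsingleton⟩
  have h : IsMaximumP3Split G s C a v b :=
    ⟨hsplit, fun C' a' v' b' h' => hmax C' ⟨a', v', b', h'⟩⟩
  by_cases hD : s \ {a, v, b} ⊆ C
  · exact ⟨a, v, b, h.isInducedP3, h.path_subset, h.subset.antisymm hD ▸ h.preconnected⟩
  · obtain ⟨d, hd, hdC⟩ := Set.not_subset.1 hD
    obtain ⟨c, hc, hP, hconn⟩ := h.exists_preconnected_sdiff hs hd hdC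
    have hPs := h.path_subset
    have hcs := h.subset hc
    exact ⟨v, a, c, hP, by grind, hconn⟩

end Nonseparable

/-- Every connected component of the subgraph of `G` induced by `X` has an even number of
vertices; stated for unions of components. -/
def HasEvenComponents {V : Type*} (G : SimpleGraph V) (X : Set V) : Prop :=
  ∀ W, IsComponentUnion G X W → Even W.ncard

section Blocks

variable {V : Type*} {G : SimpleGraph V} {s C X W : Set V} {u v : V}

theorem isGraphBlock_iff_maximal : IsGraphBlock G s ↔ Maximal (IsNonseparable G) s :=
  ⟨fun h => ⟨⟨h.1, h.2.1⟩, fun t ht hst => (h.2.2 t hst ht.1 ht.2).le⟩,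
    fun h => ⟨h.1.1, h.1.2, fun _ hst ht ht' => (h.2 ⟨ht, ht'⟩ hst).antisymm hst⟩⟩

theorem isNonseparable_pair (h : G.Adj u v) : IsNonseparable G {u, v} := by
  refine ⟨induce_pair_connected_of_adj h, fun x hx => ?_⟩
  have : (({u, v} : Set V) \ {x}).Subsingleton := by
    intro y hy z hz
    grind
  have := this.coe_sort
  exact .of_subsingleton

theorem exists_isGraphBlock_of_adj [Finite V] (h : G.Adj u v) :
    ∃ s, IsGraphBlock G s ∧ u ∈ s ∧ v ∈ s := by
  obtain ⟨s, hle, hs⟩ := Finite.exists_le_maximal (isNonseparable_pair h)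
  exact ⟨s, isGraphBlock_iff_maximal.2 hs, hle (by simp), hle (by simp)⟩

theorem exists_adj_of_preconnected (hG : G.Preconnected) (hW : W.Nonempty) (hv : v ∉ W) :
    ∃ x ∈ W, ∃ y ∉ W, G.Adj x y := by
  obtain ⟨w, hw⟩ := hW
  obtain ⟨p⟩ := hG w v
  obtain ⟨d, -, hfst, hsnd⟩ := p.exists_boundary_dart W hw hv
  exact ⟨d.fst, hfst, d.snd, hsnd, d.adj⟩

namespace IsGraphBlock

theorem isNonseparable (hs : IsGraphBlock G s) : IsNonseparable G s :=
  (isGraphBlock_iff_maximal.1 hs).1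

theorem nonempty (hs : IsGraphBlock G s) : s.Nonempty :=
  Set.nonempty_coe_sort.1 hs.1.nonempty

end IsGraphBlock

theorem IsNonseparable.preconnected_union_sdiff {c d x : V} (hs : IsNonseparable G s)
    (hC : (G.induce C).Preconnected) (hCs : Disjoint C s) (hu : u ∈ s) (hv : v ∈ s) (huv : u ≠ v)
    (hc : c ∈ C) (hcu : G.Adj c u) (hd : d ∈ C) (hdv : G.Adj d v) (hx : x ∈ s) :
    (G.induce ((s ∪ C) \ {x})).Preconnected := by
  rw [Set.union_sdiff_distrib,
    Set.sdiff_singleton_eq_self fun hxC => hCs.notMem_of_mem_left hxC hx, Set.union_comm]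
  obtain rfl | hux := eq_or_ne u x
  · exact (connected_induce_union hC (hs.2 u hu) hd ⟨hv, huv.symm⟩ hdv).preconnected
  · exact (connected_induce_union hC (hs.2 x hx) hc ⟨hu, hux⟩ hcu).preconnected

variable [Finite V]

/-- If `C` is minimal, then it is an ear: `s ∪ C` is nonseparable. -/
theorem IsGraphBlock.eq_of_adj_of_adj (hs : IsGraphBlock G s) (hC : (G.induce C).Preconnected)
    (hCs : Disjoint C s) {c d : V} (hu : u ∈ s) (hv : v ∈ s) (hc : c ∈ C) (hcu : G.Adj c u)
    (hd : d ∈ C) (hdv : G.Adj d v) : u = v := by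
  induction hn : C.ncard using Nat.strong_induction_on generalizing C with
  | _ n ih =>
  subst hn
  by_contra huv
  have hns : IsNonseparable G (s ∪ C) := by
    refine ⟨Set.union_comm s C ▸
      connected_induce_union hC hs.1.preconnected hc hu hcu, fun x hx => ?_⟩
    by_cases hxs : x ∈ s
    · exact hs.isNonseparable.preconnected_union_sdiff hC hCs hu hv huv hc hcu hd hdv hxs
    have hxC : x ∈ C := hx.resolve_left hxs
    have hsub : s ⊆ (s ∪ C) \ {x} := fun y hy => ⟨.inl hy, ne_of_mem_of_not_mem hy hxs⟩
    refine preconnected_induce_of_forall_eq_empty (hsub hu) fun U hU huU => ?_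
    by_contra hUne
    have hUs (y : V) (hy : y ∈ s) : y ∉ U := fun hyU =>
      huU (hU.subset_of_preconnected hs.1.preconnected hsub hy hyU hu)
    have hUC : U ⊆ C := fun y hy => (hU.1 hy).1.resolve_left fun hys => hUs y hys hy
    have hUX : IsComponentUnion G (C \ {x}) U :=
      hU.mono (fun y hy => ⟨hUC hy, (hU.1 hy).2⟩)
        (Set.sdiff_subset_sdiff_left Set.subset_union_right)
    refine huv (ih (C \ U).ncard (Set.ncard_lt_ncard ?_) (hUX.preconnected_sdiff hC hxC)
      (hCs.mono_left Set.sdiff_subset) ⟨hc, fun hcU => huU (hU.2 hcU (hsub hu) hcu)⟩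
      ⟨hd, fun hdU => hUs v hv (hU.2 hdU (hsub hv) hdv)⟩ rfl)
    exact hUC.sdiff_ssubset_of_nonempty (Set.nonempty_iff_ne_empty.2 hUne)
  have hcs : c ∈ s := (isGraphBlock_iff_maximal.1 hs).2 hns Set.subset_union_left (.inr hc)
  exact hCs.notMem_of_mem_left hc hcs

theorem IsGraphBlock.exists_isComponentUnion_compl_singleton (hG : G.Preconnected)
    (hs : IsGraphBlock G s) (hC : IsComponentUnion G sᶜ C) (hconn : (G.induce C).Preconnected)
    (hne : C.Nonempty) : ∃ u ∈ s, IsComponentUnion G {u}ᶜ C := by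
  have hCs : Disjoint C s := Set.disjoint_left.2 hC.1
  obtain ⟨r, hr⟩ := hs.nonempty
  obtain ⟨c, hc, u, huC, hcu⟩ := exists_adj_of_preconnected hG hne (fun h => hC.1 h hr)
  have hu : u ∈ s := by_contra fun hus => huC (hC.2 hc hus hcu)
  refine ⟨u, hu, fun x hx hxu => huC (Set.mem_singleton_iff.1 hxu ▸ hx), fun w hw y hy hadj => ?_⟩
  exact hC.2 hw (fun hys => hy (hs.eq_of_adj_of_adj hconn hCs hys hu hw hadj hc hcu)) hadj

theorem IsComponentUnion.even_ncard_of_forall_component (hW : IsComponentUnion G X W)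
    (h : ∀ C ⊆ W, C.Nonempty → IsComponentUnion G X C → (G.induce C).Preconnected →
      Even C.ncard) : Even W.ncard := by
  induction hn : W.ncard using Nat.strong_induction_on generalizing W with
  | _ n ih =>
  subst hn
  obtain rfl | ⟨a, ha⟩ := W.eq_empty_or_nonempty
  · simp
  obtain ⟨C, hC, haC, hconn⟩ := exists_component (G := G) ha
  rw [← Set.ncard_sdiff_add_ncard_of_subset hC.1]
  refine .add (ih _ (Set.ncard_lt_ncard (hC.1.sdiff_ssubset_of_nonempty ⟨a, haC⟩))
    (hW.trans hC.sdiff) (fun D hD => h D (hD.trans Set.sdiff_subset)) rfl)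
    (h C hC.1 ⟨a, haC⟩ (hW.trans hC) hconn)

theorem IsGraphBlock.hasEvenComponents_compl (hG : G.Preconnected) (hs : IsGraphBlock G s)
    (h : ∀ u ∈ s, HasEvenComponents G {u}ᶜ) : HasEvenComponents G sᶜ := fun _ hW =>
  hW.even_ncard_of_forall_component fun _ _ hne hC hconn =>
    let ⟨u, hu, hCu⟩ := hs.exists_isComponentUnion_compl_singleton hG hC hconn hne
    h u hu _ hCu

theorem IsGraphBlock.odd_ncard (hG : G.Preconnected) (hodd : Odd (Nat.card V))
    (hs : IsGraphBlock G s) (h : ∀ u ∈ s, HasEvenComponents G {u}ᶜ) : Odd s.ncard := by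
  have heven : Even sᶜ.ncard := hs.hasEvenComponents_compl hG h _ isComponentUnion_self
  have hcard := Set.ncard_add_ncard_compl s
  grind

theorem IsGraphBlock.hasEvenComponents_compl_of_subset {T : Set V} (hG : G.Preconnected)
    (hodd : Odd (Nat.card V)) (hs : IsGraphBlock G s) (h : ∀ u ∈ s, HasEvenComponents G {u}ᶜ)
    (hTs : T ⊆ s) (hT : Odd T.ncard) (hconn : (G.induce (s \ T)).Preconnected) :
    HasEvenComponents G Tᶜ := by
  have heven_of_disjoint {W : Set V} (hW : IsComponentUnion G Tᶜ W) (hWs : Disjoint W s) :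
      Even W.ncard :=
    hs.hasEvenComponents_compl hG h W
      (hW.mono hWs.subset_compl_right (Set.compl_subset_compl.2 hTs))
  intro W hW
  by_cases hWs : Disjoint W s
  · exact heven_of_disjoint hW hWs
  obtain ⟨a, haW, has⟩ := Set.not_disjoint_iff.1 hWs
  have hsub : s \ T ⊆ W :=
    hW.subset_of_preconnected hconn (fun _ hx => hx.2) ⟨has, hW.1 haW⟩ haW
  have hcompl : Even (Tᶜ \ W).ncard := heven_of_disjoint hW.sdiff <|
    Set.disjoint_left.2 fun x hx hxs => hx.2 (hsub ⟨hxs, hx.1⟩)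
  have hcard := Set.ncard_sdiff_add_ncard_of_subset hW.1
  have hcardT := Set.ncard_add_ncard_compl T
  grind

theorem hasEvenComponents_compl_singleton (hG : G.Preconnected)
    (hblocks : ∀ s, IsGraphBlock G s → Odd s.ncard) (v : V) : HasEvenComponents G {v}ᶜ := by
  intro W hW
  induction hn : W.ncard using Nat.strong_induction_on generalizing W v with
  | _ n ih =>
  subst hn
  obtain rfl | hne := W.eq_empty_or_nonempty
  · simp
  obtain ⟨a, ha, y, hy, hadj⟩ := exists_adj_of_preconnected hG hne fun hvW => hW.1 hvW rfl
  obtain rfl : y = v := by_contra fun hyv => hy (hW.2 ha hyv hadj)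
  obtain ⟨s, hs, has, hys⟩ := exists_isGraphBlock_of_adj hadj
  have hsW : s \ {y} ⊆ W := hW.subset_of_preconnected (hs.2.1 y hys) (fun _ hx => hx.2)
    ⟨has, hadj.ne⟩ ha
  have hrest : Even (W ∩ sᶜ).ncard := by
    refine (hW.restrict (Y := sᶜ) ?_).even_ncard_of_forall_component fun C hCW hCne hC hconn => ?_
    · exact Set.compl_subset_compl.2 (Set.singleton_subset_iff.2 hys)
    obtain ⟨u, -, hCu⟩ := hs.exists_isComponentUnion_compl_singleton hG hC hconn hCne
    refine ih _ (Set.ncard_lt_ncard ⟨fun x hx => (hCW hx).1, fun hWC => ?_⟩) u C hCu rfl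
    exact (hCW (hWC ha)).2 has
  have hWs : W ∩ s = s \ {y} := by
    ext x
    have := @hsW x
    grind
  have hcard := Set.ncard_inter_add_ncard_sdiff_eq_ncard W s
  have hcard_s := Set.ncard_sdiff_singleton_add_one hys
  have := hblocks s hs
  rw [hWs, Set.sdiff_eq W] at hcard
  grind

end Blocks

/-- The vertices of odd degree. A subgraph `J` of `K` with `oddVertices J = T` is a `T`-join
of `K`. -/
def oddVertices {V : Type*} (J : SimpleGraph V) : Set V :=
  {x | Odd (fdeg J x)}

section Joins

open scoped symmDiff

variable {V : Type*} {J K E : SimpleGraph V} {T U : Set V} {u w x y : V}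

theorem existsUnique_even_and_forall_pos_iff :
    ((∃! v, Even (fdeg J v)) ∧ ∀ v, 0 < fdeg J v) ↔
      ∃ v, oddVertices J = {v}ᶜ ∧ 0 < fdeg J v := by
  have hmem (x : V) : x ∉ oddVertices J ↔ Even (fdeg J x) := Nat.not_odd_iff_even
  constructor
  · rintro ⟨⟨v, hv, huniq⟩, hpos⟩
    refine ⟨v, ?_, hpos v⟩
    ext x
    have := huniq x
    have := hmem x
    grind
  · rintro ⟨v, hodd, hpos⟩
    refine ⟨⟨v, (hmem v).1 (by simp [hodd]), fun x hx => ?_⟩, fun x => ?_⟩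
    · simpa [hodd] using (hmem x).2 hx
    · obtain rfl | hxv := eq_or_ne x v
      · exact hpos
      · exact (show x ∈ oddVertices J by simpa [hodd]).pos

theorem oddVertices_bot : oddVertices (⊥ : SimpleGraph V) = ∅ := by
  ext x
  simp [oddVertices, fdeg]

theorem fdeg_edge_left (h : u ≠ w) : fdeg (edge u w) u = 1 := by
  have : (edge u w).neighborSet u = {w} := by
    ext z
    simp only [mem_neighborSet, edge_adj]
    grind
  rw [fdeg, this, Set.ncard_singleton]

theorem oddVertices_edge (h : u ≠ w) : oddVertices (edge u w) = {u, w} := by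
  ext x
  simp only [oddVertices, Set.mem_ofPred_eq, Set.mem_insert_iff, Set.mem_singleton_iff]
  constructor
  · intro hx
    have hpos : 0 < fdeg (edge u w) x := hx.pos
    obtain ⟨z, hz⟩ := Set.nonempty_of_ncard_ne_zero hpos.ne'
    grind [mem_neighborSet]
  · rintro (rfl | rfl)
    · simp [fdeg_edge_left h]
    · simp [edge_comm u x, fdeg_edge_left h.symm]

theorem fdeg_eq_degree [Fintype V] [DecidableRel J.Adj] (x : V) : fdeg J x = J.degree x := by
  rw [fdeg, Set.ncard_eq_toFinset_card']
  rfl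

theorem even_ncard_symmDiff_iff {α : Type*} [Finite α] (s t : Set α) :
    Even (s ∆ t).ncard ↔ (Even s.ncard ↔ Even t.ncard) := by
  have hst := Set.ncard_inter_add_ncard_sdiff_eq_ncard s t
  have hts := Set.ncard_inter_add_ncard_sdiff_eq_ncard t s
  rw [Set.symmDiff_def, Set.ncard_union_eq disjoint_sdiff_sdiff]
  rw [Set.inter_comm] at hts
  grind

theorem symmDiff_singleton_of_ne (h : u ≠ w) : ({u} ∆ {w} : Set V) = {u, w} := by
  rw [Set.symmDiff_def]
  grind

theorem exists_reachable_ne_mem (hu : u ∈ T)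
    (hT : Even ((K.connectedComponentMk u).supp ∩ T).ncard) :
    ∃ w ∈ T, w ≠ u ∧ K.Reachable u w := by
  by_contra! hno
  have : (K.connectedComponentMk u).supp ∩ T = {u} := by
    ext x
    constructor
    · rintro ⟨hx, hxT⟩
      by_contra hxu
      exact hno x hxT hxu (ConnectedComponent.exact hx).symm
    · rintro rfl
      exact ⟨rfl, hu⟩
  rw [this, Set.ncard_singleton] at hT
  exact Nat.not_even_one hT

theorem even_ncard_supp_inter_pair (hne : u ≠ w) (hreach : K.Reachable u w)
    (C : K.ConnectedComponent) : Even (C.supp ∩ {u, w}).ncard := by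
  have hiff : u ∈ C.supp ↔ w ∈ C.supp := by
    rw [ConnectedComponent.mem_supp_iff, ConnectedComponent.mem_supp_iff,
      ConnectedComponent.sound hreach]
  by_cases hu : u ∈ C.supp
  · rw [Set.inter_eq_right.2 (Set.pair_subset hu (hiff.1 hu)), Set.ncard_pair hne]
    exact even_two
  · have hempty : C.supp ∩ {u, w} = ∅ := by grind
    simp [hempty]

variable [Finite V]

theorem oddVertices_symmDiff (J E : SimpleGraph V) :
    oddVertices (J ∆ E) = oddVertices J ∆ oddVertices E := by
  ext x
  have hnb : (J ∆ E).neighborSet x = J.neighborSet x ∆ E.neighborSet x := by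
    rw [symmDiff_def, neighborSet_sup, neighborSet_sdiff, neighborSet_sdiff, symmDiff_def]
    rfl
  simp only [oddVertices, Set.mem_symmDiff, Set.mem_ofPred_eq, fdeg, hnb, ← Nat.not_even_iff_odd,
    even_ncard_symmDiff_iff]
  tauto

theorem even_ncard_oddVertices (J : SimpleGraph V) : Even (oddVertices J).ncard := by
  classical
  have := Fintype.ofFinite V
  have hset : oddVertices J = ({x | Odd (J.degree x)} : Finset V) := by
    ext x
    simp [oddVertices, fdeg_eq_degree]
  rw [hset, Set.ncard_coe_finset]
  exact J.even_card_odd_degree_vertices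

theorem even_ncard_inter_oddVertices (hU : ∀ x ∈ U, J.neighborSet x ⊆ U) :
    Even (U ∩ oddVertices J).ncard := by
  have hset : oddVertices (J.induce U).spanningCoe = U ∩ oddVertices J := by
    ext x
    by_cases hx : x ∈ U
    · have hnb : (J.induce U).spanningCoe.neighborSet x = J.neighborSet x := by
        ext y
        have := @hU x hx y
        simp_all
      simp [oddVertices, fdeg, hnb, hx]
    · have hnb : (J.induce U).spanningCoe.neighborSet x = ∅ := by
        ext y
        simp [hx]
      simp [oddVertices, fdeg, hnb, hx]
  exact hset ▸ even_ncard_oddVertices _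

theorem exists_le_oddVertices_eq_of_reachable (h : K.Reachable u w) :
    ∃ E ≤ K, oddVertices E = {u} ∆ {w} := by
  obtain ⟨p⟩ := h
  induction p with
  | nil => exact ⟨⊥, bot_le, by simp [oddVertices_bot]⟩
  | @cons u x w hadj _ ih =>
    obtain ⟨E, hEK, hE⟩ := ih
    refine ⟨edge u x ∆ E, symmDiff_le_sup.trans (sup_le ((edge_le_iff _).2 (.inr hadj)) hEK), ?_⟩
    rw [oddVertices_symmDiff, oddVertices_edge hadj.ne, ← symmDiff_singleton_of_ne hadj.ne, hE,
      symmDiff_assoc, symmDiff_symmDiff_cancel_left]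

theorem exists_le_oddVertices_eq
    (hT : ∀ C : K.ConnectedComponent, Even (C.supp ∩ T).ncard) :
    ∃ J ≤ K, oddVertices J = T := by
  induction hn : T.ncard using Nat.strong_induction_on generalizing T with
  | _ n ih =>
  subst hn
  obtain rfl | ⟨u, hu⟩ := T.eq_empty_or_nonempty
  · exact ⟨⊥, bot_le, oddVertices_bot⟩
  obtain ⟨w, hw, hwu, hreach⟩ := exists_reachable_ne_mem hu (hT _)
  have hsub : {u, w} ⊆ T := Set.pair_subset hu hw
  have hlt : (T ∆ {u, w}).ncard < T.ncard := by
    rw [symmDiff_of_ge hsub]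
    exact Set.ncard_lt_ncard (hsub.sdiff_ssubset_of_nonempty ⟨u, by simp⟩)
  have heven (C : K.ConnectedComponent) : Even (C.supp ∩ T ∆ {u, w}).ncard := by
    rw [Set.inter_symmDiff_distrib_left, even_ncard_symmDiff_iff]
    exact iff_of_true (hT C) (even_ncard_supp_inter_pair hwu.symm hreach C)
  obtain ⟨J, hJK, hJ⟩ := ih _ hlt heven rfl
  obtain ⟨E, hEK, hE⟩ := exists_le_oddVertices_eq_of_reachable hreach
  refine ⟨J ∆ E, symmDiff_le_sup.trans (sup_le hJK hEK), ?_⟩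
  rw [oddVertices_symmDiff, hJ, hE, symmDiff_singleton_of_ne hwu.symm,
    symmDiff_symmDiff_cancel_right]

/-- Exchanging `E` for the single edge `xy` preserves the parities and, by minimality, cannot
remove more than one edge. -/
theorem adj_of_oddVertices_eq_pair
    (hmin : ∀ J' ≤ K, oddVertices J' = oddVertices J → J.edgeSet.ncard ≤ J'.edgeSet.ncard)
    (hJK : J ≤ K) (hEJ : E ≤ J) (hxy : K.Adj x y) (hE : oddVertices E = {x, y}) : E.Adj x y := by
  have hcard : J.edgeSet.ncard ≤ (J.edgeSet \ E.edgeSet).ncard + 1 := calc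
    _ ≤ ((J \ E) ∆ edge x y).edgeSet.ncard := by
      refine hmin _ (symmDiff_le_sup.trans
        (sup_le (sdiff_le.trans hJK) ((edge_le_iff _).2 (.inr hxy)))) ?_
      rw [← symmDiff_of_ge hEJ, oddVertices_symmDiff, oddVertices_symmDiff, hE,
        oddVertices_edge hxy.ne, symmDiff_symmDiff_cancel_right]
    _ ≤ ((J \ E) ⊔ edge x y).edgeSet.ncard :=
      Set.ncard_le_ncard (edgeSet_mono symmDiff_le_sup)
    _ ≤ (J.edgeSet \ E.edgeSet).ncard + 1 := by
      rw [edgeSet_sup, edgeSet_sdiff, edgeSet_edge_of_ne hxy.ne]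
      exact (Set.ncard_union_le _ _).trans (by rw [Set.ncard_singleton])
  have hle : E.edgeSet.ncard ≤ 1 := by
    have := Set.ncard_sdiff_add_ncard_of_subset (edgeSet_mono hEJ)
    omega
  have hexists (z : V) (hz : z ∈ oddVertices E) : ∃ z', E.Adj z z' :=
    Set.nonempty_of_ncard_ne_zero (Odd.pos hz).ne'
  obtain ⟨x', hx'⟩ := hexists x (by simp [hE])
  obtain ⟨y', hy'⟩ := hexists y (by simp [hE])
  have heq : s(x, x') = s(y, y') := (Set.ncard_le_one_iff E.edgeSet.toFinite).1 hle hx' hy'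
  obtain ⟨rfl, -⟩ | ⟨rfl, rfl⟩ := Sym2.eq_iff.1 heq
  · exact absurd rfl hxy.ne
  · exact hx'

theorem isSemiperfectForest_of_minimal
    (hmin : ∀ J' ≤ K, oddVertices J' = oddVertices J → J.edgeSet.ncard ≤ J'.edgeSet.ncard)
    (hJK : J ≤ K) : IsSemiperfectForest K J := by
  have hadj {H : SimpleGraph V} (hHJ : H ≤ J) {x y : V} (hreach : H.Reachable x y)
      (hxy : K.Adj x y) : H.Adj x y := by
    obtain ⟨E, hEH, hE⟩ := exists_le_oddVertices_eq_of_reachable hreach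
    refine hEH (adj_of_oddVertices_eq_pair hmin hJK (hEH.trans hHJ) hxy ?_)
    rw [hE, symmDiff_singleton_of_ne hxy.ne]
  refine ⟨hJK, isAcyclic_iff_forall_adj_isBridge.2 fun x y hxy => isBridge_iff.2 fun hreach => ?_,
    fun x y => hadj le_rfl⟩
  simpa using hadj (J.deleteEdges_le _) hreach (hJK hxy)

theorem exists_isSemiperfectForest_oddVertices_eq
    (hT : ∀ C : K.ConnectedComponent, Even (C.supp ∩ T).ncard) :
    ∃ F, IsSemiperfectForest K F ∧ oddVertices F = T := by
  obtain ⟨J₀, hJ₀⟩ := exists_le_oddVertices_eq hT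
  obtain ⟨J, ⟨hJK, hJ⟩, hmin⟩ := Set.exists_min_image {J | J ≤ K ∧ oddVertices J = T}
    (fun J => J.edgeSet.ncard) (Set.toFinite _) ⟨J₀, hJ₀⟩
  exact ⟨J, isSemiperfectForest_of_minimal (fun J' hJ' heq => hmin J' ⟨hJ', heq.trans hJ⟩) hJK, hJ⟩

end Joins

/-- `G` with all edges between `T` and its complement removed; forests built in it split along
this cut. -/
def deleteCut {V : Type*} (G : SimpleGraph V) (T : Set V) : SimpleGraph V where
  Adj x y := G.Adj x y ∧ (x ∈ T ↔ y ∈ T)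
  symm := ⟨fun _ _ h => ⟨h.1.symm, h.2.symm⟩⟩
  loopless := ⟨fun _ h => h.1.ne rfl⟩

section Construction

variable {V : Type*} {G F : SimpleGraph V} {T : Set V} {a b v x y : V}

theorem deleteCut_le : deleteCut G T ≤ G := fun _ _ h => h.1

theorem mem_iff_of_reachable_deleteCut (h : (deleteCut G T).Reachable x y) : x ∈ T ↔ y ∈ T := by
  obtain ⟨p⟩ := h
  induction p with
  | nil => rfl
  | cons hadj _ ih => exact hadj.2.trans ih

theorem reachable_deleteCut (hT : (G.induce T).Preconnected) (hx : x ∈ T) (hy : y ∈ T) :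
    (deleteCut G T).Reachable x y :=
  (hT ⟨x, hx⟩ ⟨y, hy⟩).map
    (⟨Subtype.val, fun {u w} h => ⟨h, iff_of_true u.2 w.2⟩⟩ : G.induce T →g deleteCut G T)

theorem IsSemiperfectForest.of_deleteCut (h : IsSemiperfectForest (deleteCut G T) F) :
    IsSemiperfectForest G F :=
  ⟨h.1.trans deleteCut_le, h.2.1, fun x y hreach hadj =>
    h.2.2 x y hreach ⟨hadj, mem_iff_of_reachable_deleteCut (hreach.mono h.1)⟩⟩

theorem isComponentUnion_supp_deleteCut {D : (deleteCut G T).ConnectedComponent}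
    (hD : Disjoint D.supp T) : IsComponentUnion G Tᶜ D.supp :=
  ⟨hD.subset_compl_right, fun _ hw _ hy hadj => D.mem_supp_of_adj_mem_supp hw
    ⟨hadj, iff_of_false (hD.notMem_of_mem_left hw) hy⟩⟩

variable [Finite V]

theorem even_ncard_supp_deleteCut_inter (hT : (G.induce T).Preconnected) (hTodd : Odd T.ncard)
    (hTc : HasEvenComponents G Tᶜ) (hv : v ∈ T) (D : (deleteCut G T).ConnectedComponent) :
    Even (D.supp ∩ {v}ᶜ).ncard := by
  have hmem {x y : V} (hx : x ∈ T) (hy : y ∈ T) (hxD : x ∈ D.supp) : y ∈ D.supp :=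
    (ConnectedComponent.sound (reachable_deleteCut hT hy hx)).trans hxD
  rw [← Set.sdiff_eq]
  by_cases hvD : v ∈ D.supp
  · have hDT : D.supp = T := Set.Subset.antisymm (fun x hx => (mem_iff_of_reachable_deleteCut
      (ConnectedComponent.exact (hx.trans hvD.symm))).2 hv) fun x hx => hmem hv hx hvD
    have := Set.ncard_sdiff_singleton_add_one hv
    rw [hDT]
    grind
  · rw [Set.sdiff_singleton_eq_self hvD]
    exact hTc _ (isComponentUnion_supp_deleteCut
      (Set.disjoint_left.2 fun x hxD hxT => hvD (hmem hxT hv hxD)))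

theorem exists_isSemiperfectForest_oddVertices_eq_compl_singleton
    (hT : (G.induce T).Preconnected) (hTodd : Odd T.ncard) (hTc : HasEvenComponents G Tᶜ)
    (hv : v ∈ T) (hTv : ¬ HasEvenComponents G (T \ {v})) :
    ∃ F, IsSemiperfectForest G F ∧ oddVertices F = {v}ᶜ ∧ 0 < fdeg F v := by
  obtain ⟨F, hF, hodd⟩ := exists_isSemiperfectForest_oddVertices_eq
    (even_ncard_supp_deleteCut_inter hT hTodd hTc hv)
  refine ⟨F, hF.of_deleteCut, hodd, Nat.pos_of_ne_zero fun hzero => hTv fun W hW => ?_⟩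
  have hisolated (x : V) : ¬ F.Adj v x := fun h =>
    ((Set.ncard_eq_zero (Set.toFinite _)).1 hzero).subset h
  have hWodd : W ∩ oddVertices F = W :=
    Set.inter_eq_left.2 fun w hw => hodd ▸ (hW.1 hw).2
  rw [← hWodd]
  refine even_ncard_inter_oddVertices fun w hw y (hwy : F.Adj w y) => ?_
  refine hW.2 hw ⟨(hF.1 hwy).2.1 (hW.1 hw).1, ?_⟩ (hF.1 hwy).1
  rintro rfl
  exact hisolated w hwy.symm

theorem IsInducedP3.exists_isSemiperfectForest (h : IsInducedP3 G a v b)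
    (hc : HasEvenComponents G {a, v, b}ᶜ) :
    ∃ F, IsSemiperfectForest G F ∧ oddVertices F = {v}ᶜ ∧ 0 < fdeg F v := by
  refine exists_isSemiperfectForest_oddVertices_eq_compl_singleton ?_ h.odd_ncard hc (by simp)
    fun heven => ?_
  · exact preconnected_induce_insert (induce_pair_connected_of_adj h.adj_right).preconnected
      (Set.mem_insert v {b}) h.adj_left
  · have ha : IsComponentUnion G ({a, v, b} \ {v}) {a} := by
      have := h.adj_left.ne
      have := h.not_adj
      refine ⟨by grind, ?_⟩
      rintro _ rfl y hy hadj
      grind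
    simpa using heven _ ha

theorem exists_isSemiperfectForest_of_not_inFamilyB (hG : G.Connected)
    (hodd : Odd (Nat.card V)) (hB : ¬ InFamilyB G) :
    ∃ F, IsSemiperfectForest G F ∧ ∃ v, oddVertices F = {v}ᶜ ∧ 0 < fdeg F v := by
  by_cases heven : ∀ v, HasEvenComponents G {v}ᶜ
  · have hs_odd (s : Set V) (hs : IsGraphBlock G s) : Odd s.ncard :=
      hs.odd_ncard hG.preconnected hodd fun u _ => heven u
    obtain ⟨s, hs, hclique⟩ : ∃ s, IsGraphBlock G s ∧ ¬ G.IsClique s := by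
      by_contra! hall
      exact hB ⟨hG, fun s hs => ⟨fun x hx y hy => hall s hs hx hy, hs_odd s hs⟩⟩
    obtain ⟨a, v, b, hP, hsub, hconn⟩ :=
      hs.isNonseparable.exists_isInducedP3_preconnected_sdiff hclique
    obtain ⟨F, hF, hFv⟩ := hP.exists_isSemiperfectForest <|
      hs.hasEvenComponents_compl_of_subset hG.preconnected hodd (fun u _ => heven u) hsub
        hP.odd_ncard hconn
    exact ⟨F, hF, v, hFv⟩
  · obtain ⟨v, hv⟩ := not_forall.1 heven
    rw [Set.compl_eq_univ_sdiff] at hv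
    obtain ⟨F, hF, hFv⟩ := exists_isSemiperfectForest_oddVertices_eq_compl_singleton
      ((induceUnivIso G).preconnected_iff.2 hG.preconnected) (by rwa [Set.ncard_univ])
      (fun W hW => by simp [Set.subset_empty_iff.1 (Set.compl_univ ▸ hW.1)]) (Set.mem_univ v) hv
    exact ⟨F, hF, v, hFv⟩

end Construction

section Obstruction

variable {V : Type*} {G F : SimpleGraph V} {C s : Set V} {a b v : V}

theorem not_adj_of_isAcyclic (hF : F.IsAcyclic) (hva : F.Adj v a) (hvb : F.Adj v b) :
    ¬ F.Adj a b := by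
  intro hab
  refine isBridge_iff.1 (isAcyclic_iff_forall_adj_isBridge.1 hF hab) ?_
  refine Reachable.trans (v := v) (Adj.reachable ?_) (Adj.reachable ?_)
  · simp [hva.symm, hvb.ne, hva.ne]
  · simp [hvb, hva.ne, hvb.ne]

variable [Finite V]

theorem IsGraphBlock.mem_of_adj_of_isComponentUnion (hG : G.Preconnected) (hs : IsGraphBlock G s)
    (hvs : v ∈ s) (has : a ∈ s) (hC : IsComponentUnion G {v}ᶜ C)
    (hconn : (G.induce C).Preconnected) (ha : a ∈ C) (hb : b ∈ C) (hvb : G.Adj v b) : b ∈ s := by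
  by_contra hbs
  obtain ⟨D, hD, hbD, hDconn⟩ := exists_component (G := G) (X := sᶜ) hbs
  obtain ⟨u, -, hDu⟩ := hs.exists_isComponentUnion_compl_singleton hG hD hDconn ⟨b, hbD⟩
  obtain rfl : v = u := by_contra fun hvu => hD.1 (hDu.2 hbD hvu hvb.symm) hvs
  exact hD.1 (hDu.subset_of_preconnected hconn hC.1 hb hbD ha) has

theorem InFamilyB.fdeg_eq_zero (hB : InFamilyB G) (hF : IsSemiperfectForest G F)
    (hodd : oddVertices F = {v}ᶜ) : fdeg F v = 0 := by
  by_contra hpos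
  obtain ⟨a, hva : F.Adj v a⟩ := Set.nonempty_of_ncard_ne_zero hpos
  have hG := hB.1.preconnected
  obtain ⟨C, hC, haC, hconn⟩ := exists_component (G := G) (X := {v}ᶜ) hva.ne'
  obtain ⟨s, hs, hvs, has⟩ := exists_isGraphBlock_of_adj (hF.1 hva)
  have huniq (b : V) (hb : b ∈ C) (hvb : F.Adj v b) : b = a := by
    by_contra hba
    have hbs := hs.mem_of_adj_of_isComponentUnion hG hvs has hC hconn haC hb (hF.1 hvb)
    exact not_adj_of_isAcyclic hF.2.1 hvb hva (hF.2.2 b a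
      (hvb.symm.reachable.trans hva.reachable) ((hB.2 s hs).1 b hbs a has hba))
  have hclosed (x : V) (hx : x ∈ C) : (F \ edge v a).neighborSet x ⊆ C := by
    rintro y ⟨hxy, hne⟩
    refine hC.2 hx ?_ (hF.1 hxy)
    rintro rfl
    obtain rfl := huniq x hx hxy.symm
    exact hne (by simp [edge_adj, hxy.ne])
  have hset : C ∩ oddVertices (F \ edge v a) = C \ {a} := by
    rw [← symmDiff_of_ge ((edge_le_iff F).2 (.inr hva)), oddVertices_symmDiff, hodd,
      oddVertices_edge hva.ne, Set.symmDiff_def]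
    ext x
    have := @hC.1 x
    grind
  have heven := hset ▸ even_ncard_inter_oddVertices hclosed
  have hCeven := hasEvenComponents_compl_singleton hG (fun s hs => (hB.2 s hs).2) v C hC
  have hcard := Set.ncard_sdiff_singleton_add_one haC
  grind

end Obstruction

/-- If `G` is a connected graph of odd order `n ≥ 3`, then `G` contains a proper
1-perfect forest (a semiperfect spanning forest with exactly one vertex of even degree
and no isolated vertices) if and only if `G` does not belong to the family `B`. -/
theorem proper_one_perfect_forest_iff_not_in_B {V : Type*} [Fintype V]
    (G : SimpleGraph V) (hG : G.Connected) (hodd : Odd (Fintype.card V))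
    (h3 : 3 ≤ Fintype.card V) :
    (∃ F : SimpleGraph V, IsSemiperfectForest G F ∧
        (∃! v : V, Even (fdeg F v)) ∧ ∀ v : V, 0 < fdeg F v) ↔ ¬ InFamilyB G := by
  simp only [existsUnique_even_and_forall_pos_iff]
  constructor
  · rintro ⟨F, hF, v, hFodd, hpos⟩ hB
    exact hpos.ne' (hB.fdeg_eq_zero hF hFodd)
  · rw [Fintype.card_eq_nat_card] at hodd
    exact exists_isSemiperfectForest_of_not_inFamilyB hG hodd
end

section
/- Let G be a connected graph, let e = uv be an edge of G, and let f : V(G) → {0,1} be a function with ∑_{z ∈ V(G)} f(z) even. Suppose x is a cut-vertex of G, let C be the connected component of G − x containing u and v (there is exactly one such component since uv ∈ E(G)), let G' be the subgraph of G induced by V(C) ∪ {x}, and let f' : V(G') → {0,1} satisfy f'(w) = f(w) for all w ∈ V(C) with f'(x) ∈ {0,1} chosen so that ∑_{z ∈ V(G')} f'(z) is even. Then G has an f-parity perfect forest not containing the edge e if and only if G' has an f'-parity perfect forest not containing the edge e. -/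
open SimpleGraph

open scoped Classical

/-!
An even-sum parity function is realised on all vertices as soon as it is realised off one vertex,
by the handshake lemma. Hence restricting an `f`-parity perfect forest of `G` to one side of the
cut-vertex `x` gives an `f'`-parity perfect forest there: degrees are unchanged away from `x`.

Conversely, a perfect forest on one side is glued at `x` to one on the other side with the
prescribed parities away from `x`. The latter is a parity subgraph with the fewest edges. Indeed,
`F ≤ G` is a perfect forest iff the two ends of each edge `ab` of `G` lie in different components
of `F - ab`. If this fails for some edge `ab`, then an `a`-`b` path in `F - ab` has at least two
edges, and replacing `F` by its symmetric difference with the cycle formed by this path and `ab`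
keeps all parities and lowers the number of edges. The same criterion shows that gluing at `x`
preserves perfect forests, since collapsing one side to `x` is a retraction onto the other.
-/

open scoped symmDiff

section DegreeParity

variable {V : Type*}

/-- The vector of vertex degrees of `F` modulo 2. Working over `ZMod 2` makes it additive for the
symmetric difference of graphs. -/
noncomputable def degreeParity (F : SimpleGraph V) (w : V) : ZMod 2 :=
  fdeg F w

lemma fdeg_mod_two_eq_iff {F : SimpleGraph V} {w : V} {k : ℕ} (hk : k ≤ 1) :
    fdeg F w % 2 = k ↔ degreeParity F w = k := by
  rw [degreeParity, ZMod.natCast_eq_natCast_iff', Nat.mod_eq_of_lt (Nat.lt_succ_of_le hk)]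

lemma fdeg_eq_degree_s11 [Fintype V] (F : SimpleGraph V) (w : V) : fdeg F w = F.degree w := by
  rw [fdeg, Set.ncard_eq_toFinset_card', ← card_neighborFinset_eq_degree, neighborFinset]

lemma degreeParity_bot : degreeParity (⊥ : SimpleGraph V) = 0 := by
  ext w
  simp [degreeParity, fdeg]

lemma fdeg_symmDiff_add_two_mul_fdeg_inf [Finite V] (F K : SimpleGraph V) (w : V) :
    fdeg (F ∆ K) w + 2 * fdeg (F ⊓ K) w = fdeg F w + fdeg K w := by
  have hF := Set.ncard_inter_add_ncard_sdiff_eq_ncard (F.neighborSet w) (K.neighborSet w)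
  have hK := Set.ncard_inter_add_ncard_sdiff_eq_ncard (K.neighborSet w) (F.neighborSet w)
  have hdisj : Disjoint (F.neighborSet w \ K.neighborSet w)
      (K.neighborSet w \ F.neighborSet w) := disjoint_sdiff_sdiff
  rw [Set.inter_comm] at hK
  simp only [fdeg, symmDiff, neighborSet_sup, neighborSet_sdiff, neighborSet_inf]
  rw [Set.ncard_union_eq hdisj]
  omega

lemma degreeParity_symmDiff [Finite V] (F K : SimpleGraph V) :
    degreeParity (F ∆ K) = degreeParity F + degreeParity K := by
  ext w
  have h := congrArg (Nat.cast : ℕ → ZMod 2) (fdeg_symmDiff_add_two_mul_fdeg_inf F K w)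
  push_cast at h
  rwa [show (2 : ZMod 2) = 0 from rfl, zero_mul, add_zero] at h

lemma degreeParity_edge {a b : V} (hab : a ≠ b) :
    degreeParity (edge a b) = Pi.single a 1 + Pi.single b 1 := by
  ext w
  have hnbr : (edge a b).neighborSet w = {y | (w = a ∧ y = b) ∨ (w = b ∧ y = a)} := by
    ext y
    simp only [mem_neighborSet, edge_adj, Set.mem_ofPred_eq]
    grind
  rw [degreeParity, fdeg, hnbr]
  by_cases ha : w = a
  · simp [ha, hab]
  · by_cases hb : w = b <;> simp [ha, hb, hab.symm]

lemma sum_degreeParity [Fintype V] (F : SimpleGraph V) : ∑ w, degreeParity F w = 0 := by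
  have h := congrArg (Nat.cast : ℕ → ZMod 2) F.sum_degrees_eq_twice_card_edges
  push_cast at h
  simpa only [degreeParity, fdeg_eq_degree_s11, show (2 : ZMod 2) = 0 from rfl, zero_mul] using h

lemma forall_fdeg_mod_two_eq_of_forall_ne [Fintype V] {F : SimpleGraph V} {f : V → ℕ} {x : V}
    (hf : ∀ w, f w ≤ 1) (hsum : Even (∑ w, f w)) (h : ∀ w ≠ x, fdeg F w % 2 = f w) (w : V) :
    fdeg F w % 2 = f w := by
  obtain rfl | hw := eq_or_ne w x
  · have hcast : ∑ y, (f y : ZMod 2) = 0 := by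
      exact_mod_cast (ZMod.natCast_eq_zero_iff_even.2 hsum)
    have hoff : ∑ y ∈ Finset.univ.erase w, degreeParity F y =
        ∑ y ∈ Finset.univ.erase w, (f y : ZMod 2) :=
      Finset.sum_congr rfl fun y hy ↦
        (fdeg_mod_two_eq_iff (hf y)).1 (h y (Finset.ne_of_mem_erase hy))
    have htotal := (sum_degreeParity F).trans hcast.symm
    rw [← Finset.add_sum_erase _ _ (Finset.mem_univ w),
      ← Finset.add_sum_erase _ (fun y ↦ (f y : ZMod 2)) (Finset.mem_univ w), hoff] at htotal
    exact (fdeg_mod_two_eq_iff (hf w)).2 (add_right_cancel htotal)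
  · exact h w hw

lemma fdeg_induce_of_neighborSet_subset {F : SimpleGraph V} {A : Set V} (w : A)
    (h : F.neighborSet w ⊆ A) : fdeg (F.induce A) w = fdeg F w := by
  have himage : Subtype.val '' (F.induce A).neighborSet w = F.neighborSet w := by
    ext y
    simpa using fun hy ↦ h hy
  rw [fdeg, fdeg, ← himage, Set.ncard_image_of_injective _ Subtype.val_injective]

lemma fdeg_le_ncard_edgeSet [Finite V] (F : SimpleGraph V) (w : V) :
    fdeg F w ≤ F.edgeSet.ncard := by
  rw [fdeg, ← Nat.card_coe_set_eq, ← Nat.card_congr (F.incidenceSetEquivNeighborSet w),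
    Nat.card_coe_set_eq]
  exact Set.ncard_le_ncard (F.incidenceSet_subset w)

end DegreeParity

section ParitySpace

variable {V : Type*} [Finite V] {H : SimpleGraph V}

/-- The space of degree parity vectors of spanning subgraphs of `H`, that is, the image of the
boundary map of `H` over `ZMod 2`. Membership of `g` says that `H` has a `g`-parity subgraph. -/
noncomputable def paritySpace (H : SimpleGraph V) : AddSubgroup (V → ZMod 2) where
  carrier := {g | ∃ F ≤ H, degreeParity F = g}
  zero_mem' := ⟨⊥, bot_le, degreeParity_bot⟩
  add_mem' := by
    rintro _ _ ⟨F, hF, rfl⟩ ⟨K, hK, rfl⟩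
    exact ⟨F ∆ K, symmDiff_le_sup.trans (sup_le hF hK), degreeParity_symmDiff F K⟩
  neg_mem' := by
    rintro _ ⟨F, hF, rfl⟩
    exact ⟨F, hF, (ZModModule.neg_eq_self _).symm⟩

lemma single_add_single_mem_paritySpace {a b : V} (hab : H.Reachable a b) :
    Pi.single a 1 + Pi.single b 1 ∈ paritySpace H := by
  obtain ⟨p⟩ := hab
  induction p with
  | nil =>
    rw [ZModModule.add_self]
    exact zero_mem _
  | @cons a c b hac _ ih =>
    have hedge : Pi.single a 1 + Pi.single c 1 ∈ paritySpace H :=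
      ⟨edge a c, (edge_le_iff _).2 (.inr hac), degreeParity_edge hac.ne⟩
    have hsum := add_mem hedge ih
    rwa [add_assoc, ← add_assoc (Pi.single c 1), ZModModule.add_self, zero_add] at hsum

lemma exists_mem_paritySpace_forall_ne (hH : H.Preconnected) (x : V) (g : V → ZMod 2) :
    ∃ g' ∈ paritySpace H, ∀ w ≠ x, g' w = g w := by
  have := Fintype.ofFinite V
  refine ⟨∑ a with g a = 1, (Pi.single a 1 + Pi.single x 1),
    sum_mem fun a _ ↦ single_add_single_mem_paritySpace (hH a x), fun w hw ↦ ?_⟩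
  have hzero_or_one : ∀ z : ZMod 2, z = 0 ∨ z = 1 := by decide
  rcases hzero_or_one (g w) with h | h <;>
    simp [Finset.sum_apply, Pi.single_apply, hw, h]

end ParitySpace

section SemiperfectForest

variable {V : Type*} {G H F : SimpleGraph V}

lemma isSemiperfectForest_iff_forall_isBridge :
    IsSemiperfectForest G F ↔ F ≤ G ∧ ∀ a b, G.Adj a b → F.IsBridge s(a, b) := by
  refine and_congr_right fun hFG ↦ ⟨fun ⟨hacyc, hind⟩ a b hab ↦ ?_, fun hbridge ↦ ⟨?_, ?_⟩⟩
  · by_cases hr : F.Reachable a b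
    · exact isAcyclic_iff_forall_adj_isBridge.1 hacyc (hind a b hr hab)
    · exact IsBridge.of_not_reachable hr
  · exact isAcyclic_iff_forall_adj_isBridge.2 fun a b hab ↦ hbridge a b (hFG hab)
  · exact fun a b hr hab ↦ (hbridge a b hab).reachable_iff_adj.1 hr

lemma two_le_ncard_edgeSet_of_degreeParity_eq [Finite V] {P : SimpleGraph V} {a b : V} (hab : a ≠ b)
    (hP : degreeParity P = Pi.single a 1 + Pi.single b 1) (hadj : ¬ P.Adj a b) :
    2 ≤ P.edgeSet.ncard := by
  obtain ⟨c, hac⟩ : (P.neighborSet a).Nonempty := by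
    rw [Set.nonempty_iff_ne_empty]
    intro hempty
    simpa [degreeParity, fdeg, hempty, hab] using congrFun hP a
  have hcb : c ≠ b := fun h ↦ hadj (h ▸ hac)
  have heven : Even (fdeg P c) := by
    rw [← ZMod.natCast_eq_zero_iff_even, ← degreeParity]
    simpa [hac.ne', hcb] using congrFun hP c
  have hpos : 0 < fdeg P c := (Set.ncard_pos).2 ⟨a, hac.symm⟩
  calc
    2 ≤ fdeg P c := Nat.le_of_dvd hpos heven.two_dvd
    _ ≤ P.edgeSet.ncard := fdeg_le_ncard_edgeSet P c

lemma exists_degreeParity_eq_ncard_edgeSet_lt [Finite V] (hF : F ≤ H) {a b : V}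
    (hab : H.Adj a b) (hbridge : ¬ F.IsBridge s(a, b)) :
    ∃ K ≤ H, degreeParity K = degreeParity F ∧ K.edgeSet.ncard < F.edgeSet.ncard := by
  rw [isBridge_iff, not_not] at hbridge
  -- `P` plays the role of an `a`-`b` path in `F - ab`; exchange it for the edge `ab`.
  obtain ⟨P, hPle, hP⟩ := single_add_single_mem_paritySpace hbridge
  have hPF : P ≤ F := hPle.trans (deleteEdges_le _)
  have hPadj : ¬ P.Adj a b := fun h ↦ by simpa using hPle h
  have hcard := two_le_ncard_edgeSet_of_degreeParity_eq hab.ne hP hPadj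
  refine ⟨(F \ P) ∆ edge a b, ?_, ?_, ?_⟩
  · exact symmDiff_le_sup.trans
      (sup_le (sdiff_le.trans hF) ((edge_le_iff _).2 (.inr hab)))
  · rw [← symmDiff_of_ge hPF, degreeParity_symmDiff, degreeParity_symmDiff,
      degreeParity_edge hab.ne, hP, add_assoc, ZModModule.add_self, add_zero]
  · have hPcard : P.edgeSet.ncard ≤ F.edgeSet.ncard :=
      Set.ncard_le_ncard (edgeSet_subset_edgeSet.2 hPF)
    calc
      ((F \ P) ∆ edge a b).edgeSet.ncard
          ≤ (F.edgeSet \ P.edgeSet ∪ {s(a, b)}).ncard := by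
        rw [← edgeSet_sdiff, ← edgeSet_edge_of_ne hab.ne, ← edgeSet_sup]
        exact Set.ncard_le_ncard (edgeSet_subset_edgeSet.2 symmDiff_le_sup)
      _ ≤ (F.edgeSet \ P.edgeSet).ncard + 1 := by
        simpa using Set.ncard_union_le (F.edgeSet \ P.edgeSet) {s(a, b)}
      _ = F.edgeSet.ncard - P.edgeSet.ncard + 1 := by
        rw [Set.ncard_sdiff (edgeSet_subset_edgeSet.2 hPF)]
      _ < F.edgeSet.ncard := by omega

lemma exists_isSemiperfectForest_degreeParity_eq [Finite V] {g : V → ZMod 2}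
    (hg : g ∈ paritySpace H) : ∃ F, IsSemiperfectForest H F ∧ degreeParity F = g := by
  let S : Set (SimpleGraph V) := {F | F ≤ H ∧ degreeParity F = g}
  obtain ⟨F, ⟨hFH, hFg⟩, hmin⟩ :=
    S.toFinite.exists_minimalFor (fun F ↦ F.edgeSet.ncard) S hg
  refine ⟨F, isSemiperfectForest_iff_forall_isBridge.2 ⟨hFH, fun a b hab ↦ ?_⟩, hFg⟩
  by_contra hbridge
  obtain ⟨K, hKH, hKF, hlt⟩ := exists_degreeParity_eq_ncard_edgeSet_lt hFH hab hbridge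
  exact hlt.not_ge (hmin ⟨hKH, hKF.trans hFg⟩ hlt.le)

lemma induce_deleteEdges (F : SimpleGraph V) (A : Set V) (a b : A) :
    (F.deleteEdges {s(a.1, b.1)}).induce A = (F.induce A).deleteEdges {s(a, b)} := by
  ext c d
  simp [Subtype.ext_iff]

lemma isBridge_induce_of_isBridge {A : Set V} {a b : A} (h : F.IsBridge s(a.1, b.1)) :
    (F.induce A).IsBridge s(a, b) := by
  rw [isBridge_iff] at h ⊢
  rw [← induce_deleteEdges]
  exact fun hr ↦ h (hr.map (Embedding.induce A).toHom)

lemma IsSemiperfectForest.induce (hF : IsSemiperfectForest G F) (A : Set V) :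
    IsSemiperfectForest (G.induce A) (F.induce A) := by
  rw [isSemiperfectForest_iff_forall_isBridge] at hF ⊢
  exact ⟨fun _ _ h ↦ hF.1 h, fun a b hab ↦ isBridge_induce_of_isBridge (hF.2 a b hab)⟩

end SemiperfectForest

section Gluing

variable {V : Type*} {A B : Set V}

lemma induce_sup_spanningCoe (hAB : (A ∩ B).Subsingleton) (FA : SimpleGraph A)
    (FB : SimpleGraph B) : (FA.spanningCoe ⊔ FB.spanningCoe).induce A = FA := by
  ext a b
  have hFB : ¬ FB.spanningCoe.Adj a b := by
    rintro ⟨hne, ⟨c, hc⟩, ⟨d, hd⟩, -, rfl, rfl⟩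
    exact hne (hAB ⟨a.2, hc⟩ ⟨b.2, hd⟩)
  have hFA : FA.spanningCoe.Adj a b ↔ FA.Adj a b :=
    map_adj_apply (f := Function.Embedding.subtype _)
  simp [hFB, hFA]

lemma exists_le_induce_eq_induce_eq {G : SimpleGraph V} (hAB : (A ∩ B).Subsingleton)
    {FA : SimpleGraph A} {FB : SimpleGraph B} (hA : FA ≤ G.induce A) (hB : FB ≤ G.induce B) :
    ∃ K ≤ G, K.induce A = FA ∧ K.induce B = FB := by
  refine ⟨FA.spanningCoe ⊔ FB.spanningCoe, sup_le ?_ ?_, induce_sup_spanningCoe hAB FA FB, ?_⟩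
  · exact (map_le_iff_le_comap _ _ _).2 hA
  · exact (map_le_iff_le_comap _ _ _).2 hB
  · rw [sup_comm]
    exact induce_sup_spanningCoe (Set.inter_comm A B ▸ hAB) FB FA

end Gluing

/-- `A` and `B` are the two sides of a separation of `G` whose separator is the single vertex
`x`. -/
structure IsSeparationAt {V : Type*} (G : SimpleGraph V) (A B : Set V) (x : V) : Prop where
  inter_eq : A ∩ B = {x}
  union_eq : A ∪ B = Set.univ
  adj : ∀ a b, G.Adj a b → (a ∈ A ∧ b ∈ A) ∨ (a ∈ B ∧ b ∈ B)

namespace IsSeparationAt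

variable {V : Type*} {G K : SimpleGraph V} {A B : Set V} {x : V}

lemma of_closed {C : Set V} (hxC : x ∉ C)
    (hclosed : ∀ a ∈ C, ∀ b, b ≠ x → G.Adj a b → b ∈ C) :
    IsSeparationAt G (C ∪ {x}) Cᶜ x where
  inter_eq := by grind
  union_eq := by grind
  adj a b hab := by
    have := hclosed a
    have := hclosed b
    grind [G.adj_comm a b]

lemma symm (h : IsSeparationAt G A B x) : IsSeparationAt G B A x :=
  ⟨Set.inter_comm A B ▸ h.inter_eq, Set.union_comm A B ▸ h.union_eq,
    fun a b hab ↦ (h.adj a b hab).symm⟩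

lemma mono (h : IsSeparationAt G A B x) (hK : K ≤ G) : IsSeparationAt K A B x :=
  ⟨h.inter_eq, h.union_eq, fun a b hab ↦ h.adj a b (hK hab)⟩

lemma mem_left (h : IsSeparationAt G A B x) : x ∈ A :=
  (h.inter_eq.ge rfl).1

lemma eq_of_mem_of_mem (h : IsSeparationAt G A B x) {w : V} (hA : w ∈ A) (hB : w ∈ B) : w = x :=
  h.inter_eq.le ⟨hA, hB⟩

lemma neighborSet_subset (h : IsSeparationAt G A B x) {w : V} (hw : w ∈ A) (hwx : w ≠ x) :
    G.neighborSet w ⊆ A := fun y hy ↦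
  (h.adj w y hy).elim And.right fun hB ↦ (hwx (h.eq_of_mem_of_mem hw hB.1)).elim

lemma fdeg_induce (h : IsSeparationAt G A B x) {w : A} (hw : w.1 ≠ x) :
    fdeg (G.induce A) w = fdeg G w :=
  fdeg_induce_of_neighborSet_subset w (h.neighborSet_subset w.2 hw)

lemma reachable_induce (h : IsSeparationAt G A B x) {a b : A} (hab : G.Reachable a.1 b.1) :
    (G.induce A).Reachable a b := by
  -- Collapsing `B` onto the separator `x` retracts `G` onto `A`.
  let r : V → A := fun c ↦ if hc : c ∈ A then ⟨c, hc⟩ else ⟨x, h.mem_left⟩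
  have hrA (c : A) : r c = c := dif_pos c.2
  have hrB {c : V} (hc : c ∈ B) : r c = ⟨x, h.mem_left⟩ := by
    by_cases hcA : c ∈ A
    · exact (hrA ⟨c, hcA⟩).trans (Subtype.ext (h.eq_of_mem_of_mem hcA hc))
    · exact dif_neg hcA
  have hr {c d : V} (hcd : G.Reachable c d) : (G.induce A).Reachable (r c) (r d) := by
    obtain ⟨p⟩ := hcd
    induction p with
    | nil => rfl
    | @cons c d _ hcd _ ih =>
      refine Reachable.trans ?_ ih
      rcases h.adj c d hcd with ⟨hc, hd⟩ | ⟨hc, hd⟩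
      · rw [hrA ⟨c, hc⟩, hrA ⟨d, hd⟩]
        exact Adj.reachable hcd
      · rw [hrB hc, hrB hd]
  simpa only [hrA] using hr hab

lemma preconnected_induce (h : IsSeparationAt G A B x) (hG : G.Preconnected) :
    (G.induce A).Preconnected :=
  fun a b ↦ h.reachable_induce (hG a b)

lemma isBridge_of_induce (h : IsSeparationAt G A B x) {a b : A}
    (hbridge : (G.induce A).IsBridge s(a, b)) : G.IsBridge s(a.1, b.1) := by
  rw [isBridge_iff] at hbridge ⊢
  rw [← induce_deleteEdges] at hbridge
  exact fun hr ↦ hbridge ((h.mono (deleteEdges_le _)).reachable_induce hr)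

lemma isSemiperfectForest_of_induce (h : IsSeparationAt G A B x) (hK : K ≤ G)
    (hA : IsSemiperfectForest (G.induce A) (K.induce A))
    (hB : IsSemiperfectForest (G.induce B) (K.induce B)) : IsSemiperfectForest G K := by
  rw [isSemiperfectForest_iff_forall_isBridge] at hA hB ⊢
  refine ⟨hK, fun a b hab ↦ ?_⟩
  rcases h.adj a b hab with ⟨ha, hb⟩ | ⟨ha, hb⟩
  · exact (h.mono hK).isBridge_of_induce (hA.2 ⟨a, ha⟩ ⟨b, hb⟩ hab)
  · exact (h.mono hK).symm.isBridge_of_induce (hB.2 ⟨a, ha⟩ ⟨b, hb⟩ hab)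

lemma exists_isSemiperfectForest_extension [Finite V] (h : IsSeparationAt G A B x)
    (hB : (G.induce B).Preconnected) (g : V → ZMod 2) {FA : SimpleGraph A}
    (hFA : IsSemiperfectForest (G.induce A) FA) :
    ∃ F, IsSemiperfectForest G F ∧ F.induce A = FA ∧ ∀ w ∈ B, w ≠ x → degreeParity F w = g w := by
  obtain ⟨gB, hgB, hgBg⟩ :=
    exists_mem_paritySpace_forall_ne hB ⟨x, h.symm.mem_left⟩ fun w ↦ g w
  obtain ⟨FB, hFB, rfl⟩ := exists_isSemiperfectForest_degreeParity_eq hgB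
  obtain ⟨F, hFG, rfl, rfl⟩ := exists_le_induce_eq_induce_eq
    (h.inter_eq ▸ Set.subsingleton_singleton) hFA.1 hFB.1
  refine ⟨F, h.isSemiperfectForest_of_induce hFG hFA hFB, rfl, fun w hw hwx ↦ ?_⟩
  rw [← hgBg ⟨w, hw⟩ (fun hwx' ↦ hwx (congrArg Subtype.val hwx')), degreeParity, degreeParity,
    (h.mono hFG).symm.fdeg_induce hwx]

end IsSeparationAt

theorem cut_vertex_reduction_parity_forest_avoiding_edge_general {V : Type*} [Fintype V]
    {G : SimpleGraph V} {A B : Set V} [Fintype A] {x : V} (hsep : IsSeparationAt G A B x)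
    (hB : (G.induce B).Preconnected) {u v : V} (hu : u ∈ A) (hv : v ∈ A)
    {f : V → ℕ} (hf01 : ∀ w, f w ≤ 1) (hfsum : Even (∑ w, f w))
    {f' : A → ℕ} (hf'01 : ∀ w, f' w ≤ 1) (hf'eq : ∀ w : A, (w : V) ≠ x → f' w = f w)
    (hf'sum : Even (∑ w, f' w)) :
    (∃ F : SimpleGraph V, IsSemiperfectForest G F ∧ (∀ w, fdeg F w % 2 = f w) ∧ ¬ F.Adj u v) ↔
    (∃ F' : SimpleGraph A, IsSemiperfectForest (G.induce A) F' ∧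
      (∀ w, fdeg F' w % 2 = f' w) ∧ ¬ ∃ a b : A, (a : V) = u ∧ (b : V) = v ∧ F'.Adj a b) := by
  constructor
  · rintro ⟨F, hF, hparity, havoid⟩
    refine ⟨F.induce A, hF.induce A, ?_, by rintro ⟨a, b, rfl, rfl, hab⟩; exact havoid hab⟩
    refine forall_fdeg_mod_two_eq_of_forall_ne (x := ⟨x, hsep.mem_left⟩) hf'01 hf'sum fun w hw ↦ ?_
    have hwx : (w : V) ≠ x := fun h ↦ hw (Subtype.ext h)
    rw [(hsep.mono hF.1).fdeg_induce hwx, hparity, hf'eq w hwx]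
  · rintro ⟨F', hF', hparity, havoid⟩
    obtain ⟨F, hF, rfl, hFB⟩ :=
      hsep.exists_isSemiperfectForest_extension hB (fun w ↦ f w) hF'
    refine ⟨F, hF, forall_fdeg_mod_two_eq_of_forall_ne (x := x) hf01 hfsum fun w hwx ↦ ?_,
      fun huv ↦ havoid ⟨⟨u, hu⟩, ⟨v, hv⟩, rfl, rfl, huv⟩⟩
    rcases hsep.union_eq.ge (Set.mem_univ w) with hwA | hwB
    · rw [← hf'eq ⟨w, hwA⟩ hwx, ← hparity ⟨w, hwA⟩, (hsep.mono hF.1).fdeg_induce hwx]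
    · exact (fdeg_mod_two_eq_iff (hf01 w)).2 (hFB w hwB hwx)

/-- Cut-vertex reduction for `f`-parity perfect forests avoiding a prescribed edge.
Let `G` be connected, `e = uv ∈ E(G)`, `f : V → {0,1}` even-sum, and let `x` be a
cut-vertex of `G`. Let `C` be the connected component of `G − x` meeting `{u, v}`
(described by: `x ∉ C`, `G[C]` connected, `C` closed under adjacency in `G − x`, and
`{u,v} \ {x} ⊆ C`), let `G' = G[C ∪ {x}]`, and let `f'` agree with `f` on `C` and be
even-sum on `G'`. Then `G` has an `f`-parity perfect forest not containing `e` iff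
`G'` has an `f'`-parity perfect forest not containing `e`. -/
theorem cut_vertex_reduction_parity_forest_avoiding_edge {V : Type*} [Fintype V]
    (G : SimpleGraph V) (hG : G.Connected) (u v x : V) (huv : G.Adj u v)
    (f : V → ℕ) (hf01 : ∀ w, f w ≤ 1) (hfsum : Even (∑ w, f w))
    (hcut : ¬ (G.induce (({x} : Set V)ᶜ)).Connected)
    (C : Set V) (hxC : x ∉ C) (hCconn : (G.induce C).Connected)
    (hCclosed : ∀ a ∈ C, ∀ b : V, b ≠ x → G.Adj a b → b ∈ C)
    (hCuv : ∀ w ∈ ({u, v} : Set V), w ≠ x → w ∈ C)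
    (f' : (C ∪ {x} : Set V) → ℕ) (hf'01 : ∀ w, f' w ≤ 1)
    (hf'eq : ∀ w : (C ∪ {x} : Set V), (w : V) ∈ C → f' w = f (w : V))
    (hf'sum : Even (∑ w : (C ∪ {x} : Set V), f' w)) :
    (∃ F : SimpleGraph V, IsSemiperfectForest G F ∧
        (∀ w : V, fdeg F w % 2 = f w) ∧ ¬ F.Adj u v) ↔
    (∃ F' : SimpleGraph (C ∪ {x} : Set V),
        IsSemiperfectForest (G.induce (C ∪ {x} : Set V)) F' ∧
        (∀ w : (C ∪ {x} : Set V), fdeg F' w % 2 = f' w) ∧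
        ¬ ∃ a b : (C ∪ {x} : Set V), (a : V) = u ∧ (b : V) = v ∧ F'.Adj a b) := by
  have hsep := IsSeparationAt.of_closed hxC hCclosed
  exact cut_vertex_reduction_parity_forest_avoiding_edge_general hsep
    (hsep.symm.preconnected_induce hG.preconnected) (by grind) (by grind)
    hf01 hfsum hf'01 (fun w hw ↦ hf'eq w (w.2.resolve_right hw)) hf'sum
end
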